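/- For the exponential random graph model with parameter β in Dobrushin's uniqueness region Φ_β'(1) < 2 (with β subcritical), there exists a constant C > 0, depending only on β₁,…,β_k and H₁,…,H_k, such that for all n ≥ 2 the normalized number of edges W_n satisfies d_Wass(W_n, Z) ≤ C n^{−1/2} and d_Kol(W_n, Z) ≤ C n^{−1/2}, where Z is a standard normal random variable. -/

import Mathlib

open MeasureTheory ProbabilityTheory Real Finset

noncomputable section

/-- The index set `I = {(i,j) : 1 ≤ i < j ≤ n}` of potential edges on `n` labeled vertices. -/
def EdgeIdx (n : ℕ) : Type := {p : Fin n × Fin n // p.1 < p.2}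

instance (n : ℕ) : Fintype (EdgeIdx n) := by unfold EdgeIdx; infer_instance
instance (n : ℕ) : DecidableEq (EdgeIdx n) := by unfold EdgeIdx; infer_instance

/-- Adjacency of the graph `G_y` encoded by the edge-indicator vector `y`. -/
def yAdj {n : ℕ} (y : EdgeIdx n → Bool) (a b : Fin n) : Bool :=
  if h : a < b then y ⟨(a, b), h⟩ else if h' : b < a then y ⟨(b, a), h'⟩ else false

/-- The number of edges of a graph `H`. -/
def eCount {V : Type} [Fintype V] (H : SimpleGraph V) : ℕ :=
  Nat.card H.edgeSet

/-- `|Hom(H, G_y)|`: the number of injective maps from the vertex set of `H` to `Fin n`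
mapping every edge of `H` to an edge of `G_y`. -/
def homCount {V : Type} [Fintype V] {n : ℕ} (H : SimpleGraph V) (y : EdgeIdx n → Bool) : ℕ :=
  Nat.card {φ : V → Fin n //
    Function.Injective φ ∧ ∀ a b, H.Adj a b → yAdj y (φ a) (φ b) = true}

/-- `|Hom(H, G_y, s)|`: the number of pairs `(φ, (u, v))` where `φ` is injective, `(u, v)` is
an ordered pair of adjacent vertices of `H` with `{φ u, φ v} = s`, and every edge of `H` other
than `{u, v}` is mapped by `φ` to an edge of `G_y` (regardless of whether the edge `s` is
present in `G_y`). -/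
def homCountAt {V : Type} [Fintype V] {n : ℕ} (H : SimpleGraph V) (y : EdgeIdx n → Bool)
    (s : EdgeIdx n) : ℕ :=
  Nat.card {t : (V → Fin n) × V × V //
    Function.Injective t.1 ∧ H.Adj t.2.1 t.2.2 ∧
    Sym2.mk (t.1 t.2.1, t.1 t.2.2) = Sym2.mk (s.1.1, s.1.2) ∧
    ∀ a b, H.Adj a b → Sym2.mk (a, b) ≠ Sym2.mk (t.2.1, t.2.2) →
      yAdj y (t.1 a) (t.1 b) = true}

section ERGM

variable {k : ℕ} (β : Fin (k + 1) → ℝ) (v : Fin (k + 1) → ℕ)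
  (H : ∀ j : Fin (k + 1), SimpleGraph (Fin (v j)))

/-- The (unnormalized) ERGM weight `exp (Σ_j β_j n^{2−v_j} |Hom(H_j, G_y)|)`. -/
def ergmWeight (n : ℕ) (y : EdgeIdx n → Bool) : ℝ :=
  Real.exp (∑ j, β j * (n : ℝ) ^ ((2 : ℤ) - (v j : ℤ)) * (homCount (H j) y : ℝ))

/-- The ERGM normalizing constant. -/
def ergmZ (n : ℕ) : ℝ := ∑ y : EdgeIdx n → Bool, ergmWeight β v H n y

/-- The ERGM probability of the configuration `y`. -/
def ergmProb (n : ℕ) (y : EdgeIdx n → Bool) : ℝ := ergmWeight β v H n y / ergmZ β v H n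

/-- Expectation of `G(Y)` under the ERGM. -/
def ergmExp (n : ℕ) (G : (EdgeIdx n → Bool) → ℝ) : ℝ :=
  ∑ y : EdgeIdx n → Bool, ergmProb β v H n y * G y

/-- Variance of `G(Y)` under the ERGM. -/
def ergmVar (n : ℕ) (G : (EdgeIdx n → Bool) → ℝ) : ℝ :=
  ergmExp β v H n (fun y => (G y - ergmExp β v H n G) ^ 2)

/-- The total number of edges of `G_y`. -/
def edgeSum {n : ℕ} (y : EdgeIdx n → Bool) : ℝ :=
  ∑ s : EdgeIdx n, (if y s then (1 : ℝ) else 0)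

/-- `Φ_β(a) = Σ_j β_j e_j a^{e_j − 1}`. -/
def PhiFn : ℝ → ℝ := fun a =>
  ∑ j, β j * (eCount (H j) : ℝ) * a ^ (eCount (H j) - 1)

/-- `φ_β(a) = e^{2Φ_β(a)} / (e^{2Φ_β(a)} + 1)`. -/
def phiFn : ℝ → ℝ := fun a =>
  Real.exp (2 * PhiFn β v H a) / (Real.exp (2 * PhiFn β v H a) + 1)

/-- `σ_n² = N p (1−p) / (1 − 2 p (1−p) Φ_β'(p))` with `N = n(n−1)/2`. -/
def sigmaSq (p : ℝ) (n : ℕ) : ℝ :=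
  ((n : ℝ) * ((n : ℝ) - 1) / 2) * p * (1 - p) /
    (1 - 2 * p * (1 - p) * deriv (PhiFn β v H) p)

/-- `μ_n = E Σ_{s ∈ I} Y_s`. -/
def muN (n : ℕ) : ℝ := ergmExp β v H n (edgeSum)

/-- The standardized number of edges `W_n`. -/
def Wn (p : ℝ) (n : ℕ) (y : EdgeIdx n → Bool) : ℝ :=
  (edgeSum y - muN β v H n) / Real.sqrt (sigmaSq β v H p n)

end ERGM

/-! ### The logistic function -/

lemma abs_sigmoid_sub_le (a b : ℝ) : |sigmoid a - sigmoid b| ≤ 1 / 4 * |a - b| := by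
  have h := Convex.norm_image_sub_le_of_norm_deriv_le (f := sigmoid) (s := Set.univ) (C := 1 / 4)
    (fun x _ => differentiableAt_sigmoid) (fun x _ => ?_) convex_univ (Set.mem_univ b)
    (Set.mem_univ a)
  · simpa [Real.norm_eq_abs] using h
  · rw [deriv_sigmoid, Real.norm_eq_abs, abs_le]
    have h1 := sigmoid_pos x
    have h2 := sigmoid_lt_one x
    constructor
    · nlinarith
    · nlinarith [sq_nonneg (sigmoid x - 1 / 2)]

lemma abs_sigmoid_sub_linear_le (θ a b : ℝ) :
    |sigmoid a - sigmoid b - sigmoid θ * (1 - sigmoid θ) * (a - b)| ≤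
      |a - b| * (|a - θ| + |b - θ|) := by
  set c := sigmoid θ * (1 - sigmoid θ) with hc
  have hd : ∀ x, HasDerivAt (fun x => sigmoid x - c * x)
      (sigmoid x * (1 - sigmoid x) - c) x := fun x => by
    have h1 : HasDerivAt (fun x => c * x) c x := by
      simpa using (hasDerivAt_id x).const_mul c
    exact (hasDerivAt_sigmoid x).sub h1
  have h := Convex.norm_image_sub_le_of_norm_hasDerivWithin_le
    (f := fun x => sigmoid x - c * x) (s := Set.uIcc b a) (C := |a - θ| + |b - θ|)
    (fun x _ => (hd x).hasDerivWithinAt) (fun x hx => ?_) (convex_uIcc b a)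
    Set.left_mem_uIcc Set.right_mem_uIcc
  · simp only [Real.norm_eq_abs] at h
    rw [show sigmoid a - sigmoid b - c * (a - b) = sigmoid a - c * a - (sigmoid b - c * b) by ring]
    exact h.trans (mul_comm _ _).le
  · have hx' : |x - θ| ≤ |a - θ| + |b - θ| := by
      rcases Set.mem_uIcc.1 hx with ⟨h1, h2⟩ | ⟨h1, h2⟩ <;>
      · rw [abs_le]
        constructor <;>
          linarith [le_abs_self (a - θ), neg_abs_le (a - θ), le_abs_self (b - θ),
            neg_abs_le (b - θ), abs_nonneg (a - θ), abs_nonneg (b - θ)]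
    have e : sigmoid x * (1 - sigmoid x) - c =
        (sigmoid x - sigmoid θ) * (1 - sigmoid x - sigmoid θ) := by rw [hc]; ring
    rw [e, Real.norm_eq_abs, abs_mul]
    have h3 := abs_sigmoid_sub_le x θ
    have h4 : |1 - sigmoid x - sigmoid θ| ≤ 1 := by
      rw [abs_le]
      constructor <;> linarith [sigmoid_pos x, sigmoid_lt_one x, sigmoid_pos θ, sigmoid_lt_one θ]
    calc _ ≤ |sigmoid x - sigmoid θ| * 1 := by gcongr
      _ ≤ |x - θ| := by linarith [abs_nonneg (x - θ)]
      _ ≤ _ := hx'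

/-! ### Gibbs measures on the discrete cube -/

section Gibbs

variable {I : Type*} [DecidableEq I]

/-- The discrete derivative of `F` in coordinate `s`. -/
def dd (s : I) (F : (I → Bool) → ℝ) (y : I → Bool) : ℝ :=
  F (Function.update y s true) - F (Function.update y s false)

/-- The conditional probability that the coordinate `s` is present. -/
def condProb (h : (I → Bool) → ℝ) (s : I) (y : I → Bool) : ℝ := sigmoid (dd s h y)

/-- The conditional expectation of `F` given all coordinates except `s`. -/
def resample (h : (I → Bool) → ℝ) (s : I) (F : (I → Bool) → ℝ) (y : I → Bool) : ℝ :=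
  condProb h s y * F (Function.update y s true) +
    (1 - condProb h s y) * F (Function.update y s false)

lemma dd_update (s : I) (F : (I → Bool) → ℝ) (y : I → Bool) (b : Bool) :
    dd s F (Function.update y s b) = dd s F y := by
  simp [dd]

lemma condProb_update (h : (I → Bool) → ℝ) (s : I) (y : I → Bool) (b : Bool) :
    condProb h s (Function.update y s b) = condProb h s y := by
  simp [condProb, dd_update]

lemma condProb_nonneg (h : (I → Bool) → ℝ) (s : I) (y : I → Bool) : 0 ≤ condProb h s y :=
  sigmoid_nonneg _

lemma condProb_le_one (h : (I → Bool) → ℝ) (s : I) (y : I → Bool) : condProb h s y ≤ 1 :=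
  sigmoid_le_one _

lemma resample_update (h : (I → Bool) → ℝ) (s : I) (F : (I → Bool) → ℝ) (y : I → Bool)
    (b : Bool) : resample h s F (Function.update y s b) = resample h s F y := by
  simp [resample, condProb_update]

lemma resample_mul_of_update_eq (h : (I → Bool) → ℝ) (s : I) (F G : (I → Bool) → ℝ)
    (hG : ∀ y b, G (Function.update y s b) = G y) (y : I → Bool) :
    resample h s (fun y => F y * G y) y = resample h s F y * G y := by
  simp [resample, hG]; ring

lemma resample_sq (h : (I → Bool) → ℝ) (s : I) (F : (I → Bool) → ℝ) (y : I → Bool) :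
    resample h s (fun y => F y ^ 2) y - resample h s F y ^ 2 =
      condProb h s y * (1 - condProb h s y) * dd s F y ^ 2 := by
  simp only [resample, dd]; ring

variable [Fintype I]

/-- The Gibbs probability weights with Hamiltonian `h`. -/
def gibbs (h : (I → Bool) → ℝ) (y : I → Bool) : ℝ := exp (h y) / ∑ y', exp (h y')

/-- Expectation under the Gibbs measure with Hamiltonian `h`. -/
def gE (h : (I → Bool) → ℝ) (F : (I → Bool) → ℝ) : ℝ := ∑ y, gibbs h y * F y

variable (h : (I → Bool) → ℝ)

lemma gibbs_pos (y : I → Bool) : 0 < gibbs h y :=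
  div_pos (exp_pos _) (sum_pos (fun _ _ => exp_pos _) univ_nonempty)

lemma sum_gibbs : ∑ y, gibbs h y = 1 := by
  rw [← div_self (sum_pos (fun y _ => exp_pos (h y)) univ_nonempty).ne', sum_div]
  rfl

lemma gE_const (c : ℝ) : gE h (fun _ => c) = c := by
  simp [gE, ← sum_mul, sum_gibbs]

lemma gE_add (F G : (I → Bool) → ℝ) : gE h (fun y => F y + G y) = gE h F + gE h G := by
  simp [gE, mul_add, sum_add_distrib]

lemma gE_sub (F G : (I → Bool) → ℝ) : gE h (fun y => F y - G y) = gE h F - gE h G := by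
  simp [gE, mul_sub, sum_sub_distrib]

lemma gE_const_mul (c : ℝ) (F : (I → Bool) → ℝ) : gE h (fun y => c * F y) = c * gE h F := by
  simp only [gE, mul_sum]
  exact sum_congr rfl fun y _ => by ring

lemma gE_mul_const (c : ℝ) (F : (I → Bool) → ℝ) : gE h (fun y => F y * c) = gE h F * c := by
  simp only [gE, sum_mul]
  exact sum_congr rfl fun y _ => by ring

lemma gE_sum {ι : Type*} (S : Finset ι) (F : ι → (I → Bool) → ℝ) :
    gE h (fun y => ∑ i ∈ S, F i y) = ∑ i ∈ S, gE h (F i) := by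
  simp only [gE, mul_sum]
  exact sum_comm

lemma gE_mono {F G : (I → Bool) → ℝ} (hFG : ∀ y, F y ≤ G y) : gE h F ≤ gE h G :=
  sum_le_sum fun y _ => mul_le_mul_of_nonneg_left (hFG y) (gibbs_pos h y).le

lemma gE_nonneg {F : (I → Bool) → ℝ} (hF : ∀ y, 0 ≤ F y) : 0 ≤ gE h F :=
  sum_nonneg fun y _ => mul_nonneg (gibbs_pos h y).le (hF y)

lemma gE_le_of_le {F : (I → Bool) → ℝ} {c : ℝ} (hF : ∀ y, F y ≤ c) : gE h F ≤ c :=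
  (gE_mono h hF).trans (gE_const h c).le

lemma abs_gE_le (F : (I → Bool) → ℝ) : |gE h F| ≤ gE h (fun y => |F y|) := by
  refine (abs_sum_le_sum_abs _ _).trans (sum_le_sum fun y _ => ?_)
  rw [abs_mul, abs_of_pos (gibbs_pos h y)]

lemma gE_mul_sq_le (F G : (I → Bool) → ℝ) :
    gE h (fun y => F y * G y) ^ 2 ≤ gE h (fun y => F y ^ 2) * gE h (fun y => G y ^ 2) := by
  refine sum_sq_le_sum_mul_sum_of_sq_le_mul _ (fun y _ => ?_) (fun y _ => ?_) (fun y _ => ?_)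
  · exact mul_nonneg (gibbs_pos h y).le (sq_nonneg _)
  · exact mul_nonneg (gibbs_pos h y).le (sq_nonneg _)
  · exact le_of_eq (by ring)

lemma gE_sq_le (F : (I → Bool) → ℝ) : gE h F ^ 2 ≤ gE h (fun y => F y ^ 2) := by
  simpa [gE_const] using gE_mul_sq_le h F (fun _ => 1)

lemma gE_abs_le_of_sq_le {F : (I → Bool) → ℝ} {c : ℝ} (hc : 0 ≤ c)
    (hF : gE h (fun y => F y ^ 2) ≤ c ^ 2) : gE h (fun y => |F y|) ≤ c := by
  have := gE_sq_le h (fun y => |F y|)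
  simp only [sq_abs] at this
  exact (abs_le_of_sq_le_sq' (this.trans hF) hc).2

lemma gibbs_update_true (s : I) (y : I → Bool) :
    gibbs h (Function.update y s true) = condProb h s y *
      (gibbs h (Function.update y s true) + gibbs h (Function.update y s false)) := by
  have hZ : 0 < ∑ y', exp (h y') := sum_pos (fun y _ => exp_pos (h y)) univ_nonempty
  have h0 := exp_pos (h (Function.update y s false))
  have h1 := exp_pos (h (Function.update y s true))
  simp only [gibbs, condProb, dd, sigmoid_def, neg_sub, exp_sub]
  field_simp

lemma gibbs_update_false (s : I) (y : I → Bool) :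
    gibbs h (Function.update y s false) = (1 - condProb h s y) *
      (gibbs h (Function.update y s true) + gibbs h (Function.update y s false)) := by
  linarith [gibbs_update_true h s y]

lemma sum_eq_half_sum_update (s : I) (F : (I → Bool) → ℝ) :
    ∑ y, F y = 1 / 2 * ∑ y, (F (Function.update y s true) + F (Function.update y s false)) := by
  have key : ∑ y : I → Bool, F y = ∑ y : I → Bool, F (Function.update y s (!y s)) := by
    refine (Equiv.sum_comp (Function.Involutive.toPerm
      (fun y : I → Bool => Function.update y s (!y s)) fun y => by simp) F).symm
  have h2 : ∀ y : I → Bool, F (Function.update y s true) + F (Function.update y s false) =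
      F y + F (Function.update y s (!y s)) := by
    intro y
    cases hy : y s
    · have : Function.update y s false = y := by rw [← hy]; simp
      simp [this, add_comm]
    · have : Function.update y s true = y := by rw [← hy]; simp
      simp [this]
  simp only [h2, sum_add_distrib, ← key]
  ring

lemma gE_resample (s : I) (F : (I → Bool) → ℝ) : gE h (resample h s F) = gE h F := by
  unfold gE
  rw [sum_eq_half_sum_update s (fun y => gibbs h y * F y),
    sum_eq_half_sum_update s (fun y => gibbs h y * resample h s F y)]
  congr 1
  refine sum_congr rfl fun y _ => ?_
  simp only [resample_update]
  unfold resample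
  linear_combination -F (Function.update y s true) * gibbs_update_true h s y -
    F (Function.update y s false) * gibbs_update_false h s y

lemma gE_mul_resample (s : I) (F G : (I → Bool) → ℝ) :
    gE h (fun y => F y * resample h s G y) =
      gE h (fun y => resample h s F y * resample h s G y) := by
  rw [← gE_resample h s]
  congr 1
  ext y
  exact resample_mul_of_update_eq h s F _ (resample_update h s G) y

end Gibbs

section Poincare

variable {I : Type*} [DecidableEq I]

lemma abs_sub_update_le {F : (I → Bool) → ℝ} {s : I} {c : ℝ} (hF : ∀ y, |dd s F y| ≤ c)
    (y : I → Bool) (b b' : Bool) :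
    |F (Function.update y s b) - F (Function.update y s b')| ≤ c := by
  have h0 : 0 ≤ c := (abs_nonneg _).trans (hF y)
  have := hF y
  cases b <;> cases b'
  · simpa using h0
  · rw [abs_sub_comm]; exact this
  · exact this
  · simpa using h0

variable {h : (I → Bool) → ℝ}

lemma abs_dd_resample_le {s t : I} (hst : t ≠ s) {F : (I → Bool) → ℝ} {d : I → ℝ}
    (hF : ∀ t y, |dd t F y| ≤ d t) {c : ℝ} (hc : ∀ y, |dd t (condProb h s) y| ≤ c)
    (y : I → Bool) : |dd t (resample h s F) y| ≤ d t + c * d s := by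
  have e : dd t (resample h s F) y =
      (condProb h s (Function.update y t true) * dd t F (Function.update y s true) +
      (1 - condProb h s (Function.update y t true)) * dd t F (Function.update y s false)) +
      dd t (condProb h s) y * dd s F (Function.update y t false) := by
    simp only [dd, resample, Function.update_comm hst]
    ring
  rw [e]
  set q := condProb h s (Function.update y t true)
  have hq0 : 0 ≤ q := condProb_nonneg _ _ _
  have hq1 : q ≤ 1 := condProb_le_one _ _ _
  refine (abs_add_le _ _).trans (add_le_add ?_ ?_)
  · refine (abs_add_le _ _).trans ?_
    rw [abs_mul, abs_mul, abs_of_nonneg hq0, abs_of_nonneg (sub_nonneg.2 hq1)]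
    have h1 := mul_le_mul_of_nonneg_left (hF t (Function.update y s true)) hq0
    have h2 := mul_le_mul_of_nonneg_left (hF t (Function.update y s false)) (sub_nonneg.2 hq1)
    linarith
  · rw [abs_mul]
    exact mul_le_mul (hc y) (hF s _) (abs_nonneg _) ((abs_nonneg _).trans (hc y))

lemma dd_resample_self (s : I) (F : (I → Bool) → ℝ) (y : I → Bool) :
    dd s (resample h s F) y = 0 := by
  simp [dd, resample_update]

variable [Fintype I]

lemma abs_sub_le_sum {F : (I → Bool) → ℝ} {d : I → ℝ} (hF : ∀ t y, |dd t F y| ≤ d t)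
    (y y' : I → Bool) : |F y - F y'| ≤ ∑ t, d t := by
  have key : ∀ S : Finset I, ∀ y : I → Bool,
      |F y - F (fun t => if t ∈ S then y' t else y t)| ≤ ∑ t ∈ S, d t := by
    intro S
    induction S using Finset.induction_on with
    | empty => intro y; simp
    | insert a S ha ih =>
      intro y
      rw [sum_insert ha]
      have e : (fun t => if t ∈ insert a S then y' t else y t) =
          fun t => if t ∈ S then y' t else Function.update y a (y' a) t := by
        ext t
        by_cases hta : t = a
        · subst hta; simp [ha]
        · simp [hta, Function.update_of_ne]
      rw [e]
      have h1 := abs_sub_update_le (hF a) y (y a) (y' a)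
      rw [Function.update_eq_self] at h1
      exact (abs_sub_le _ _ _).trans (add_le_add h1 (ih _))
  simpa using key univ y

/-- One step of Glauber dynamics, summed over the updated coordinate. -/
def glauber (h : (I → Bool) → ℝ) (F : (I → Bool) → ℝ) (y : I → Bool) : ℝ :=
  (Fintype.card I : ℝ)⁻¹ * ∑ s, resample h s F y

lemma dd_glauber (t : I) (F : (I → Bool) → ℝ) (y : I → Bool) :
    dd t (glauber h F) y = (Fintype.card I : ℝ)⁻¹ * ∑ s, dd t (resample h s F) y := by
  simp only [dd, glauber, sum_sub_distrib, mul_sub]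

variable {C : I → I → ℝ} {ρ : ℝ}

lemma exists_abs_dd_glauber_le [Nonempty I]
    (hC : ∀ s t, t ≠ s → ∀ y, |dd t (condProb h s) y| ≤ C s t)
    (hrow : ∀ s, ∑ t ∈ univ.erase s, C s t ≤ ρ)
    {F : (I → Bool) → ℝ} {d : I → ℝ} (hF : ∀ t y, |dd t F y| ≤ d t) :
    ∃ d' : I → ℝ, (∀ t y, |dd t (glauber h F) y| ≤ d' t) ∧
      ∑ t, d' t ≤ (1 - (1 - ρ) / Fintype.card I) * ∑ t, d t := by
  set N : ℝ := (Fintype.card I : ℝ) with hN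
  have hNpos : 0 < N := by simp [hN, Fintype.card_pos]
  have hd0 : ∀ t, 0 ≤ d t := fun t => (abs_nonneg _).trans (hF t fun _ => true)
  refine ⟨fun t => N⁻¹ * ∑ s ∈ univ.erase t, (d t + C s t * d s), fun t y => ?_, ?_⟩
  · rw [dd_glauber, abs_mul, abs_of_pos (inv_pos.2 hNpos)]
    refine mul_le_mul_of_nonneg_left ?_ (inv_pos.2 hNpos).le
    rw [← add_sum_erase _ _ (mem_univ t), dd_resample_self, zero_add]
    refine (abs_sum_le_sum_abs _ _).trans (sum_le_sum fun s hs => ?_)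
    have hst : t ≠ s := (ne_of_mem_erase hs).symm
    exact abs_dd_resample_le hst hF (hC s t hst) y
  · have e : ∑ t, ∑ s ∈ univ.erase t, C s t * d s = ∑ s, (∑ t ∈ univ.erase s, C s t) * d s := by
      simp only [sum_mul]
      refine sum_comm' fun t s => ?_
      simp [eq_comm]
    have e2 : ∀ t : I, ((univ.erase t).card : ℝ) = N - 1 := fun t => by
      rw [card_erase_of_mem (mem_univ t), Nat.cast_sub (Finset.card_pos.2 ⟨t, mem_univ t⟩)]
      simp [hN]
    simp only [← mul_sum, sum_add_distrib, sum_const, nsmul_eq_mul, e2, e]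
    have h1 : ∑ s, (∑ t ∈ univ.erase s, C s t) * d s ≤ ρ * ∑ s, d s := by
      rw [mul_sum]
      exact sum_le_sum fun s _ => mul_le_mul_of_nonneg_right (hrow s) (hd0 s)
    calc N⁻¹ * ((N - 1) * ∑ s, d s + ∑ s, (∑ t ∈ univ.erase s, C s t) * d s)
        ≤ N⁻¹ * ((N - 1) * ∑ s, d s + ρ * ∑ s, d s) := by gcongr
      _ = _ := by field_simp; ring

lemma gE_glauber [Nonempty I] (F : (I → Bool) → ℝ) : gE h (glauber h F) = gE h F := by
  have hN : (Fintype.card I : ℝ) ≠ 0 := by simp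
  unfold glauber
  rw [gE_const_mul, gE_sum]
  simp only [gE_resample, sum_const, nsmul_eq_mul, card_univ]
  field_simp

lemma gE_mul_glauber (F G : (I → Bool) → ℝ) :
    gE h (fun y => F y * glauber h G y) = gE h (fun y => glauber h F y * G y) := by
  have e1 : ∀ F G : (I → Bool) → ℝ, gE h (fun y => F y * glauber h G y) =
      (Fintype.card I : ℝ)⁻¹ * ∑ s, gE h (fun y => resample h s F y * resample h s G y) := by
    intro F G
    simp only [← gE_mul_resample]
    rw [← gE_sum, ← gE_const_mul]
    congr 1
    ext y
    rw [glauber, ← mul_sum]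
    ring
  rw [e1, show (fun y => glauber h F y * G y) = fun y => G y * glauber h F y from
    funext fun y => mul_comm _ _, e1]
  simp only [mul_comm]

lemma gE_sq_glauber_le [Nonempty I] (hρ : 0 ≤ ρ)
    (hC : ∀ s t, t ≠ s → ∀ y, |dd t (condProb h s) y| ≤ C s t)
    (hrow : ∀ s, ∑ t ∈ univ.erase s, C s t ≤ ρ)
    {F : (I → Bool) → ℝ} (hF0 : gE h F = 0) :
    gE h (fun y => glauber h F y ^ 2) ≤
      (1 - (1 - ρ) / Fintype.card I) ^ 2 * gE h (fun y => F y ^ 2) := by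
  set N : ℝ := (Fintype.card I : ℝ) with hN
  have hN1 : 1 ≤ N := by simp [hN, Nat.one_le_iff_ne_zero]
  set κ := 1 - (1 - ρ) / N with hκ
  have hκ0 : 0 ≤ κ := by
    rw [hκ, sub_nonneg, div_le_one (by linarith)]
    linarith
  let P : ℕ → (I → Bool) → ℝ := fun m => (glauber h)^[m] F
  have hPs : ∀ m, P (m + 1) = glauber h (P m) := fun m =>
    Function.iterate_succ_apply' _ _ _
  let a : ℕ → ℝ := fun m => gE h (fun y => P m y ^ 2)
  have ha0 : ∀ m, 0 ≤ a m := fun m => gE_nonneg _ fun y => sq_nonneg _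
  have hconv : ∀ m, a (m + 1) ^ 2 ≤ a m * a (m + 2) := by
    intro m
    have e : a (m + 1) = gE h (fun y => P m y * P (m + 2) y) := by
      rw [hPs (m + 1), gE_mul_glauber]
      simp only [a, hPs m]
      congr 1; ext y; ring
    rw [e]
    exact gE_mul_sq_le _ _ _
  have hd0 : ∀ t y, |dd t F y| ≤ ∑ y', |dd t F y'| := fun t y =>
    single_le_sum (f := fun y' => |dd t F y'|) (fun _ _ => abs_nonneg _) (mem_univ y)
  set D := ∑ t, ∑ y', |dd t F y'| with hD
  have hdec : ∀ m, ∃ d : I → ℝ, (∀ t y, |dd t (P m) y| ≤ d t) ∧ ∑ t, d t ≤ κ ^ m * D := by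
    intro m
    induction m with
    | zero => exact ⟨_, hd0, by simp [hD]⟩
    | succ m ih =>
      obtain ⟨d, hd, hs⟩ := ih
      obtain ⟨d', hd', hs'⟩ := exists_abs_dd_glauber_le hC hrow hd
      refine ⟨d', by rwa [hPs], hs'.trans ?_⟩
      rw [pow_succ', mul_assoc]
      exact mul_le_mul_of_nonneg_left hs hκ0
  have hmean : ∀ m, gE h (P m) = 0 := by
    intro m
    induction m with
    | zero => exact hF0
    | succ m ih => rw [hPs, gE_glauber, ih]
  have hbound : ∀ m, a m ≤ (κ ^ 2) ^ m * D ^ 2 := by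
    intro m
    obtain ⟨d, hd, hs⟩ := hdec m
    refine gE_le_of_le _ fun y => ?_
    have h1 : |P m y| ≤ κ ^ m * D := by
      have e : P m y = gE h (fun y' => P m y - P m y') := by
        rw [gE_sub, gE_const, hmean, sub_zero]
      rw [e]
      refine (abs_gE_le _ _).trans (gE_le_of_le _ fun y' => ?_)
      exact (abs_sub_le_sum hd y y').trans hs
    calc P m y ^ 2 = |P m y| ^ 2 := (sq_abs _).symm
      _ ≤ (κ ^ m * D) ^ 2 := by gcongr
      _ = _ := by rw [mul_pow, pow_right_comm]
  by_contra! hcon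
  change κ ^ 2 * a 0 < a 1 at hcon
  have ha1 : 0 < a 1 := lt_of_le_of_lt (by have := ha0 0; positivity) hcon
  have ha00 : 0 < a 0 := by
    rcases (ha0 0).lt_or_eq with h0 | h0
    · exact h0
    · have := hconv 0
      rw [← h0, zero_mul] at this
      nlinarith
  set r := a 1 / a 0 with hr
  have hrκ : κ ^ 2 < r := by rwa [hr, lt_div_iff₀ ha00]
  have hrpos : 0 < r := div_pos ha1 ha00
  have hstep : ∀ m, 0 < a m ∧ r * a m ≤ a (m + 1) := by
    intro m
    induction m with
    | zero => exact ⟨ha00, by rw [hr, div_mul_cancel₀ _ ha00.ne']⟩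
    | succ m ih =>
      obtain ⟨h1, h2⟩ := ih
      have h3 : 0 < a (m + 1) := lt_of_lt_of_le (mul_pos hrpos h1) h2
      refine ⟨h3, ?_⟩
      have h4 := hconv m
      refine le_of_mul_le_mul_left ?_ h1
      nlinarith
  have hgrow : ∀ m, r ^ m * a 0 ≤ a m := by
    intro m
    induction m with
    | zero => simp
    | succ m ih =>
      rw [pow_succ', mul_assoc]
      exact (mul_le_mul_of_nonneg_left ih hrpos.le).trans (hstep m).2
  have hlim : Filter.Tendsto (fun m : ℕ => (κ ^ 2 / r) ^ m * D ^ 2) Filter.atTop (nhds 0) := by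
    have := tendsto_pow_atTop_nhds_zero_of_lt_one (r := κ ^ 2 / r) (by positivity)
      ((div_lt_one hrpos).2 hrκ)
    simpa using this.mul_const (D ^ 2)
  refine absurd (ge_of_tendsto' hlim fun m => ?_) (not_le.2 ha00)
  have := (hgrow m).trans (hbound m)
  rw [div_pow, div_mul_eq_mul_div, le_div_iff₀ (pow_pos hrpos m)]
  linarith

/-- The variance under the Gibbs measure. -/
def gVar (h : (I → Bool) → ℝ) (F : (I → Bool) → ℝ) : ℝ := gE h (fun y => (F y - gE h F) ^ 2)

/-- The Poincaré inequality under Dobrushin's condition. -/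
theorem gVar_le_sum [Nonempty I] (hρ : 0 ≤ ρ) (hρ1 : ρ < 1)
    (hC : ∀ s t, t ≠ s → ∀ y, |dd t (condProb h s) y| ≤ C s t)
    (hrow : ∀ s, ∑ t ∈ univ.erase s, C s t ≤ ρ) (F : (I → Bool) → ℝ) :
    gVar h F ≤ 1 / (4 * (1 - ρ)) * ∑ s, gE h (fun y => dd s F y ^ 2) := by
  set N : ℝ := (Fintype.card I : ℝ) with hN
  have hNpos : 0 < N := by simp [hN, Fintype.card_pos]
  set f : (I → Bool) → ℝ := fun y => F y - gE h F with hf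
  have hf0 : gE h f = 0 := by rw [hf, gE_sub, gE_const, sub_self]
  have hdf : ∀ s y, dd s f y = dd s F y := fun s y => by simp [dd, hf]
  have h1 := gE_sq_glauber_le hρ hC hrow hf0
  set κ := 1 - (1 - ρ) / Fintype.card I with hκ
  have hκ0 : 0 ≤ κ := by
    have : 1 ≤ N := by simp [hN, Nat.one_le_iff_ne_zero]
    rw [hκ, sub_nonneg, div_le_one (by linarith)]
    linarith
  have hV : 0 ≤ gVar h F := gE_nonneg _ fun y => sq_nonneg _
  change _ ≤ κ ^ 2 * gVar h F at h1
  have h2 : gE h (fun y => f y * glauber h f y) ≤ κ * gVar h F := by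
    have := gE_mul_sq_le h f (glauber h f)
    change _ ≤ gVar h F * _ at this
    refine abs_le_of_sq_le_sq' (a := _) (b := _) ?_ (by positivity) |>.2
    calc _ ≤ _ := this
      _ ≤ gVar h F * (κ ^ 2 * gVar h F) := by gcongr
      _ = _ := by ring
  have h3 : N * gE h (fun y => f y * glauber h f y) =
      ∑ s, gE h (fun y => resample h s f y ^ 2) := by
    rw [← gE_const_mul]
    simp only [sq, ← gE_mul_resample]
    rw [← gE_sum]
    congr 1
    ext y
    rw [glauber, ← mul_sum, ← hN]
    field_simp
  have h4 : ∀ s, gVar h F - gE h (fun y => resample h s f y ^ 2) ≤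
      1 / 4 * gE h (fun y => dd s F y ^ 2) := by
    intro s
    have e : gVar h F = gE h (resample h s fun y => f y ^ 2) := (gE_resample h s _).symm
    rw [e, ← gE_sub, ← gE_const_mul]
    refine gE_mono _ fun y => ?_
    rw [resample_sq, hdf]
    have := sq_nonneg (condProb h s y - 1 / 2)
    exact mul_le_mul_of_nonneg_right (by nlinarith) (sq_nonneg _)
  have h5 := sum_le_sum fun s (_ : s ∈ univ) => h4 s
  rw [sum_sub_distrib, ← h3, ← mul_sum, sum_const, card_univ, nsmul_eq_mul, ← hN] at h5
  have h6 : N * gE h (fun y => f y * glauber h f y) ≤ N * (κ * gVar h F) := by gcongr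
  have h7 : N * (κ * gVar h F) = N * gVar h F - (1 - ρ) * gVar h F := by
    rw [hκ, ← hN]
    field_simp
  rw [div_mul_eq_mul_div, le_div_iff₀ (by linarith)]
  linarith

end Poincare

section Polynomial

variable {I : Type*} [DecidableEq I]

/-- The indicator that all coordinates in `S` are present. -/
def mono (S : Finset I) (y : I → Bool) : ℝ := ∏ t ∈ S, if y t then 1 else 0

omit [DecidableEq I] in
lemma mono_nonneg (S : Finset I) (y : I → Bool) : 0 ≤ mono S y :=
  prod_nonneg fun t _ => by split_ifs <;> norm_num

omit [DecidableEq I] in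
lemma mono_le_one (S : Finset I) (y : I → Bool) : mono S y ≤ 1 :=
  prod_le_one (fun t _ => by split_ifs <;> norm_num) fun t _ => by split_ifs <;> norm_num

omit [DecidableEq I] in
lemma abs_mono_le_one (S : Finset I) (y : I → Bool) : |mono S y| ≤ 1 := by
  rw [abs_of_nonneg (mono_nonneg S y)]
  exact mono_le_one S y

lemma mono_update_of_notMem {S : Finset I} {s : I} (hs : s ∉ S) (y : I → Bool) (b : Bool) :
    mono S (Function.update y s b) = mono S y :=
  prod_congr rfl fun t ht => by rw [Function.update_of_ne (ne_of_mem_of_not_mem ht hs)]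

lemma mono_insert {S : Finset I} {s : I} (hs : s ∉ S) (y : I → Bool) :
    mono (insert s S) y = mono {s} y * mono S y := by
  simp [mono, prod_insert hs]

lemma dd_mono (S : Finset I) (s : I) (y : I → Bool) :
    dd s (mono S) y = if s ∈ S then mono (S.erase s) y else 0 := by
  split_ifs with h
  · have hs : s ∉ S.erase s := notMem_erase s S
    rw [← insert_erase h]
    simp only [dd, mono_insert hs, mono_update_of_notMem hs, erase_insert_eq_erase]
    simp [mono]
  · simp [dd, mono_update_of_notMem h]

lemma dd_sum {ι : Type*} (S : Finset ι) (F : ι → (I → Bool) → ℝ) (s : I) (y : I → Bool) :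
    dd s (fun y => ∑ i ∈ S, F i y) y = ∑ i ∈ S, dd s (F i) y := by
  simp [dd, sum_sub_distrib]

lemma dd_const_mul (c : ℝ) (F : (I → Bool) → ℝ) (s : I) (y : I → Bool) :
    dd s (fun y => c * F y) y = c * dd s F y := by
  simp [dd, mul_sub]

variable {A : Type*} [Fintype A]

/-- The multilinear Hamiltonian with monomials `T α` and coefficients `c α`. -/
def ham (T : A → Finset I) (c : A → ℝ) (y : I → Bool) : ℝ := ∑ α, c α * mono (T α) y

/-- The total weight of the monomials containing both `s` and `t`. -/
def jointWeight (T : A → Finset I) (c : A → ℝ) (s t : I) : ℝ :=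
  ∑ α with s ∈ T α ∧ t ∈ T α, |c α|

variable (T : A → Finset I) (c : A → ℝ)

lemma jointWeight_comm (s t : I) : jointWeight T c s t = jointWeight T c t s := by
  simp [jointWeight, and_comm]

lemma jointWeight_nonneg (s t : I) : 0 ≤ jointWeight T c s t :=
  sum_nonneg fun _ _ => abs_nonneg _

lemma dd_ham (s : I) (y : I → Bool) :
    dd s (ham T c) y = ∑ α with s ∈ T α, c α * mono ((T α).erase s) y := by
  unfold ham
  simp only [dd_sum, dd_const_mul, dd_mono, sum_filter, mul_ite, mul_zero]

lemma dd_dd_ham {s t : I} (hst : t ≠ s) (y : I → Bool) :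
    dd t (dd s (ham T c)) y =
      ∑ α with s ∈ T α ∧ t ∈ T α, c α * mono (((T α).erase s).erase t) y := by
  rw [funext (dd_ham T c s)]
  simp only [dd_sum, dd_const_mul, dd_mono, mem_erase, hst, ne_eq, not_false_eq_true, true_and,
    mul_ite, mul_zero]
  rw [← sum_filter, filter_filter]

lemma abs_dd_dd_ham_le {s t : I} (hst : t ≠ s) (y : I → Bool) :
    |dd t (dd s (ham T c)) y| ≤ jointWeight T c s t := by
  rw [dd_dd_ham T c hst]
  refine (abs_sum_le_sum_abs _ _).trans (sum_le_sum fun α _ => ?_)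
  rw [abs_mul]
  exact mul_le_of_le_one_right (abs_nonneg _) (abs_mono_le_one _ _)

lemma dd_dd_self (s : I) (F : (I → Bool) → ℝ) (y : I → Bool) : dd s (dd s F) y = 0 := by
  simp [dd]

lemma dd_condProb_self (h : (I → Bool) → ℝ) (s : I) (y : I → Bool) :
    dd s (condProb h s) y = 0 := by
  simp [dd, condProb]

lemma abs_dd_condProb_ham_le {s t : I} (hst : t ≠ s) (y : I → Bool) :
    |dd t (condProb (ham T c) s) y| ≤ 1 / 4 * jointWeight T c s t :=
  (abs_sigmoid_sub_le _ _).trans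
    (mul_le_mul_of_nonneg_left (abs_dd_dd_ham_le T c hst y) (by norm_num))

lemma sum_abs_coeff_mul [Fintype I] (s : I) :
    ∑ α with s ∈ T α, |c α| * (((T α).card : ℝ) - 1) =
      ∑ t ∈ univ.erase s, jointWeight T c s t := by
  have h1 : ∀ α, s ∈ T α → |c α| * (((T α).card : ℝ) - 1) = ∑ t ∈ (T α).erase s, |c α| := by
    intro α h
    rw [sum_const, card_erase_of_mem h, nsmul_eq_mul,
      Nat.cast_sub (Finset.card_pos.2 ⟨s, h⟩)]
    push_cast
    ring
  rw [sum_congr rfl fun α h => h1 α (mem_filter.1 h).2]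
  unfold jointWeight
  refine sum_comm' fun α t => ?_
  simp only [mem_filter, mem_univ, true_and, mem_erase, and_true]
  tauto

/-- Quantitative form of Dobrushin's uniqueness condition for a multilinear Hamiltonian, together
with the mean-field approximation of its first two derivatives at the density `p`. -/
structure IsDobrushin [Fintype I] (T : A → Finset I) (c : A → ℝ) (ρ K m η p θ θ' : ℝ) : Prop where
  ρ_nonneg : 0 ≤ ρ
  ρ_lt_one : ρ < 1
  one_le_K : 1 ≤ K
  one_le_m : 1 ≤ m
  η_pos : 0 < η
  η_le_one : η ≤ 1
  sigmoid_eq : sigmoid θ = p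
  card_le : ∀ α, ((T α).card : ℝ) ≤ m
  jointWeight_le : ∀ s t, t ≠ s → jointWeight T c s t ≤ K * η
  sum_jointWeight_le : ∀ s, ∑ t ∈ univ.erase s, jointWeight T c s t ≤ 4 * ρ
  first_order : ∀ s, |∑ α with s ∈ T α, c α * p ^ ((T α).card - 1) - θ| ≤ K * η
  second_order : ∀ s, |∑ α with s ∈ T α,
    c α * ((((T α).card : ℝ) - 1) * p ^ ((T α).card - 2)) - θ'| ≤ K * η
  one_le_card : 1 ≤ K * η * Fintype.card I

namespace IsDobrushin

variable [Fintype I] {T c} {ρ K m η p θ θ' : ℝ} (hD : IsDobrushin T c ρ K m η p θ θ')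

include hD

lemma nonempty : Nonempty I := by
  by_contra hI
  rw [not_nonempty_iff] at hI
  have := hD.one_le_card
  simp at this
  linarith

lemma p_pos : 0 < p := hD.sigmoid_eq ▸ sigmoid_pos θ

lemma p_lt_one : p < 1 := hD.sigmoid_eq ▸ sigmoid_lt_one θ

lemma gVar_le (F : (I → Bool) → ℝ) :
    gVar (ham T c) F ≤
      1 / (4 * (1 - ρ)) * ∑ s, gE (ham T c) (fun y => dd s F y ^ 2) := by
  have := hD.nonempty
  refine gVar_le_sum (C := fun s t => 1 / 4 * jointWeight T c s t) hD.ρ_nonneg hD.ρ_lt_one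
    (fun s t hst y => abs_dd_condProb_ham_le T c hst y) (fun s => ?_) F
  rw [← mul_sum]
  linarith [hD.sum_jointWeight_le s]

lemma gVar_le_of_sq_le {F : (I → Bool) → ℝ} {a : ℝ}
    (ha : ∀ s, gE (ham T c) (fun y => dd s F y ^ 2) ≤ a ^ 2) :
    gVar (ham T c) F ≤ 1 / (4 * (1 - ρ)) * (Fintype.card I * a ^ 2) := by
  refine (hD.gVar_le F).trans ?_
  have h1 : 0 ≤ 1 / (4 * (1 - ρ)) := by
    have := hD.ρ_lt_one
    exact div_nonneg zero_le_one (by linarith)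
  refine mul_le_mul_of_nonneg_left ?_ h1
  refine (sum_le_sum fun s _ => ha s).trans ?_
  simp

/-- The order of magnitude of the fluctuations of the local fields. -/
local notation "ε" => K / (1 - ρ) * √η

lemma eps_pos : 0 < ε := by
  have h1 := hD.ρ_lt_one
  have h2 := hD.one_le_K
  have h3 := hD.η_pos
  have : 0 < 1 - ρ := by linarith
  positivity

lemma mul_eta_le_eps : K * η ≤ ε := by
  have h1 := hD.ρ_lt_one
  have h0 := hD.ρ_nonneg
  have h2 := hD.one_le_K
  have h3 := hD.η_pos
  have h4 : η ≤ √η := by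
    rw [Real.le_sqrt' h3]
    nlinarith [hD.η_le_one]
  have h5 : K ≤ K / (1 - ρ) := by
    rw [le_div_iff₀ (by linarith)]
    nlinarith
  gcongr

lemma gVar_le_of_local {F : (I → Bool) → ℝ} {s : I} {B : ℝ}
    (hs : ∀ y, dd s F y = 0) (hF : ∀ t, t ≠ s → ∀ y, |dd t F y| ≤ B * jointWeight T c s t) :
    gVar (ham T c) F ≤ B ^ 2 * ε ^ 2 := by
  have h1 := hD.ρ_lt_one
  have h0 := hD.ρ_nonneg
  have hK := hD.one_le_K
  have hη := hD.η_pos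
  have h1' : 0 < 1 - ρ := by linarith
  have hsum : ∑ t, gE (ham T c) (fun y => dd t F y ^ 2) ≤ B ^ 2 * (K * η * (4 * ρ)) := by
    rw [← add_sum_erase _ _ (mem_univ s)]
    have e0 : gE (ham T c) (fun y => dd s F y ^ 2) = 0 := by simp [hs, gE]
    rw [e0, zero_add]
    calc ∑ t ∈ univ.erase s, gE (ham T c) (fun y => dd t F y ^ 2)
        ≤ ∑ t ∈ univ.erase s, B ^ 2 * (K * η * jointWeight T c s t) := by
          refine sum_le_sum fun t ht => gE_le_of_le _ fun y => ?_
          have hts := ne_of_mem_erase ht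
          have hJ := jointWeight_nonneg T c s t
          calc dd t F y ^ 2 = |dd t F y| ^ 2 := (sq_abs _).symm
            _ ≤ (B * jointWeight T c s t) ^ 2 := by gcongr; exact hF t hts y
            _ = B ^ 2 * (jointWeight T c s t * jointWeight T c s t) := by ring
            _ ≤ _ := by gcongr; exact hD.jointWeight_le s t hts
      _ = B ^ 2 * (K * η * ∑ t ∈ univ.erase s, jointWeight T c s t) := by
          rw [← mul_sum, ← mul_sum]
      _ ≤ _ := by gcongr; exact hD.sum_jointWeight_le s
  calc gVar (ham T c) F ≤ _ := hD.gVar_le F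
    _ ≤ 1 / (4 * (1 - ρ)) * (B ^ 2 * (K * η * (4 * ρ))) := by gcongr
    _ = B ^ 2 * (ρ * (K / (1 - ρ) * η)) := by field_simp
    _ ≤ B ^ 2 * (K / (1 - ρ) * (K / (1 - ρ) * η)) := by
        gcongr
        rw [le_div_iff₀ h1']
        nlinarith
    _ = B ^ 2 * ε ^ 2 := by rw [mul_pow _ (√η), Real.sq_sqrt hη.le]; ring

lemma gVar_dd_ham_le (s : I) : gVar (ham T c) (dd s (ham T c)) ≤ ε ^ 2 := by
  simpa using hD.gVar_le_of_local (B := 1) (dd_dd_self s (ham T c))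
    fun t ht y => by simpa using abs_dd_dd_ham_le T c ht y

lemma gE_abs_condProb_sub_le (s : I) :
    gE (ham T c) (fun y => |condProb (ham T c) s y - gE (ham T c) (condProb (ham T c) s)|) ≤
      ε := by
  refine gE_abs_le_of_sq_le _ hD.eps_pos.le ?_
  refine (hD.gVar_le_of_local (B := 1 / 4) (dd_condProb_self _ s)
    fun t ht y => abs_dd_condProb_ham_le T c ht y).trans ?_
  nlinarith [sq_nonneg (ε)]

omit hD [Fintype I] in
lemma resample_mono_singleton (h : (I → Bool) → ℝ) (s : I) :
    resample h s (mono {s}) = condProb h s := by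
  ext y; simp [resample, mono]

omit hD in
lemma gE_condProb (h : (I → Bool) → ℝ) (s : I) :
    gE h (condProb h s) = gE h (mono {s}) := by
  rw [← resample_mono_singleton, gE_resample]

omit hD in
lemma gE_mono_singleton_mul (h : (I → Bool) → ℝ) (s : I) (G : (I → Bool) → ℝ)
    (hG : ∀ y b, G (Function.update y s b) = G y) :
    gE h (fun y => mono {s} y * G y) = gE h (fun y => condProb h s y * G y) := by
  rw [← gE_resample h s]
  congr 1; ext y
  rw [resample_mul_of_update_eq _ _ _ _ hG, resample_mono_singleton]

lemma abs_gE_mono_sub_prod_le (S : Finset I) :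
    |gE (ham T c) (mono S) - ∏ t ∈ S, gE (ham T c) (mono {t})| ≤ S.card * (ε) := by
  induction S using Finset.induction_on with
  | empty =>
    have e : mono (∅ : Finset I) = fun _ => 1 := by ext y; simp [mono]
    simp [e, gE_const]
  | insert s S hs ih =>
    set a := gE (ham T c) (mono {s}) with ha
    have ha0 : 0 ≤ a := gE_nonneg _ (mono_nonneg _)
    have ha1 : a ≤ 1 := gE_le_of_le _ (mono_le_one _)
    have e : gE (ham T c) (mono (insert s S)) - a * gE (ham T c) (mono S) =
        gE (ham T c) (fun y => (condProb (ham T c) s y - a) * mono S y) := by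
      rw [funext (mono_insert hs),
        gE_mono_singleton_mul _ _ _ (fun y b => mono_update_of_notMem hs y b), ← gE_const_mul,
        ← gE_sub]
      simp only [sub_mul]
    have h1 : |gE (ham T c) (mono (insert s S)) - a * gE (ham T c) (mono S)| ≤ ε := by
      rw [e]
      refine (abs_gE_le _ _).trans (le_trans (gE_mono _ fun y => ?_)
        (hD.gE_abs_condProb_sub_le s))
      rw [abs_mul, gE_condProb]
      exact mul_le_of_le_one_right (abs_nonneg _) (abs_mono_le_one _ _)
    rw [prod_insert hs, card_insert_of_notMem hs, ← ha]
    calc _ = |(gE (ham T c) (mono (insert s S)) - a * gE (ham T c) (mono S)) +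
          a * (gE (ham T c) (mono S) - ∏ t ∈ S, gE (ham T c) (mono {t}))| := by congr 1; ring
      _ ≤ ε + a * (S.card * (ε)) := by
          refine (abs_add_le _ _).trans (add_le_add h1 ?_)
          rw [abs_mul, abs_of_nonneg ha0]
          gcongr
      _ ≤ ε + S.card * (ε) := by
          have := hD.eps_pos
          exact add_le_add le_rfl
            (mul_le_of_le_one_left (mul_nonneg (Nat.cast_nonneg _) this.le) ha1)
      _ = _ := by push_cast; ring

omit hD [Fintype I] in
lemma abs_prod_sub_pow_le {a : I → ℝ} {p b : ℝ} (ha0 : ∀ t, 0 ≤ a t) (ha1 : ∀ t, a t ≤ 1)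
    (hp0 : 0 ≤ p) (hp1 : p ≤ 1) (hb : ∀ t, |a t - p| ≤ b) (S : Finset I) :
    |∏ t ∈ S, a t - p ^ S.card| ≤ S.card * b := by
  induction S using Finset.induction_on with
  | empty => simp
  | insert s S hs ih =>
    rw [prod_insert hs, card_insert_of_notMem hs, pow_succ']
    have hP0 : 0 ≤ p ^ S.card := pow_nonneg hp0 _
    have hP1 : p ^ S.card ≤ 1 := pow_le_one₀ hp0 hp1
    calc _ = |a s * (∏ t ∈ S, a t - p ^ S.card) + (a s - p) * p ^ S.card| := by congr 1; ring
      _ ≤ 1 * (S.card * b) + b * 1 := by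
          have hb0 : 0 ≤ b := (abs_nonneg _).trans (hb s)
          refine (abs_add_le _ _).trans (add_le_add ?_ ?_)
          · rw [abs_mul, abs_of_nonneg (ha0 s)]
            exact mul_le_mul (ha1 s) ih (abs_nonneg _) zero_le_one
          · rw [abs_mul, abs_of_nonneg hP0]
            exact mul_le_mul (hb s) hP1 hP0 hb0
      _ = _ := by push_cast; ring

lemma abs_gE_mono_sub_pow_le {b : ℝ} (hb : ∀ s, |gE (ham T c) (mono {s}) - p| ≤ b)
    (S : Finset I) : |gE (ham T c) (mono S) - p ^ S.card| ≤ S.card * (ε + b) := by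
  have h1 := hD.abs_gE_mono_sub_prod_le S
  have h2 := abs_prod_sub_pow_le (fun t => gE_nonneg _ (mono_nonneg {t}))
    (fun t => gE_le_of_le _ (mono_le_one {t})) hD.p_pos.le hD.p_lt_one.le hb S
  rw [mul_add]
  exact (abs_sub_le _ _ _).trans (add_le_add h1 h2)

lemma abs_gE_dd_ham_sub_le {b : ℝ} (hb : ∀ s, |gE (ham T c) (mono {s}) - p| ≤ b) (s : I) :
    |gE (ham T c) (dd s (ham T c)) - θ| ≤ 4 * ρ * (ε + b) + ε := by
  have hb0 : 0 ≤ b := (abs_nonneg _).trans (hb s)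
  have hε := hD.eps_pos
  rw [funext (dd_ham T c s), gE_sum]
  simp only [gE_const_mul]
  refine (abs_sub_le _ (∑ α with s ∈ T α, c α * p ^ ((T α).card - 1)) _).trans
    (add_le_add ?_ ((hD.first_order s).trans hD.mul_eta_le_eps))
  rw [← sum_sub_distrib]
  calc _ ≤ ∑ α with s ∈ T α, |c α| * (((T α).card : ℝ) - 1) * (ε + b) := by
        refine (abs_sum_le_sum_abs _ _).trans (sum_le_sum fun α hα => ?_)
        have hs := (mem_filter.1 hα).2
        rw [← mul_sub, abs_mul, mul_assoc]
        refine mul_le_mul_of_nonneg_left ?_ (abs_nonneg _)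
        have := hD.abs_gE_mono_sub_pow_le hb ((T α).erase s)
        rw [card_erase_of_mem hs, Nat.cast_sub (Finset.card_pos.2 ⟨s, hs⟩)] at this
        simpa using this
    _ ≤ _ := by
        rw [← sum_mul, sum_abs_coeff_mul]
        gcongr
        exact hD.sum_jointWeight_le s

omit hD in
lemma gE_sub_const_sq (h F : _) (a : ℝ) :
    gE (I := I) h (fun y => (F y - a) ^ 2) = gVar h F + (gE h F - a) ^ 2 := by
  have e : (fun y => (F y - a) ^ 2) = fun y => (F y - gE h F) ^ 2 +
      (2 * (gE h F - a) * (F y - gE h F) + (gE h F - a) ^ 2) := by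
    ext y; ring
  rw [e, gE_add, gE_add, gE_const_mul, gE_sub, gE_const, gE_const, gVar]
  ring

/-- The bound for the deviation of the edge densities from `p`. -/
local notation "δ" => 2 * (K / (1 - ρ) * √η) / (1 - ρ)

lemma eps_le : 2 * (ε) ≤ δ := by
  have h1 := hD.ρ_lt_one
  have h0 := hD.ρ_nonneg
  have := hD.eps_pos
  rw [le_div_iff₀ (by linarith)]
  nlinarith

lemma abs_gE_mono_singleton_sub_le (s : I) : |gE (ham T c) (mono {s}) - p| ≤ δ := by
  have := hD.nonempty
  have h1 := hD.ρ_lt_one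
  have h0 := hD.ρ_nonneg
  have hε := hD.eps_pos
  obtain ⟨s₀, hs₀⟩ := Finite.exists_max fun s : I => |gE (ham T c) (mono {s}) - p|
  refine (hs₀ s).trans ?_
  set b := |gE (ham T c) (mono {s₀}) - p| with hb
  have hbias := hD.abs_gE_dd_ham_sub_le hs₀ s₀
  have hvar := gE_abs_le_of_sq_le _ hε.le (hD.gVar_dd_ham_le s₀)
  have h2 : b ≤ 1 / 4 * (ε + (4 * ρ * (ε + b) + ε)) := by
    have e : gE (ham T c) (mono {s₀}) - p =
        gE (ham T c) (fun y => condProb (ham T c) s₀ y - p) := by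
      rw [gE_sub, gE_const, gE_condProb]
    calc b = _ := by rw [hb, e]
      _ ≤ _ := abs_gE_le _ _
      _ ≤ gE (ham T c) (fun y => 1 / 4 *
          (|dd s₀ (ham T c) y - gE (ham T c) (dd s₀ (ham T c))| +
            |gE (ham T c) (dd s₀ (ham T c)) - θ|)) := by
          refine gE_mono _ fun y => ?_
          rw [← hD.sigmoid_eq]
          refine (abs_sigmoid_sub_le _ _).trans ?_
          gcongr
          exact abs_sub_le _ _ _
      _ ≤ _ := by
          rw [gE_const_mul, gE_add, gE_const]
          gcongr
  rw [le_div_iff₀ (by linarith)]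
  nlinarith

lemma gE_dd_ham_sub_sq_le (s : I) :
    gE (ham T c) (fun y => (dd s (ham T c) y - θ) ^ 2) ≤ (7 * (δ)) ^ 2 := by
  have h1 := hD.ρ_lt_one
  have h0 := hD.ρ_nonneg
  have hε := hD.eps_pos
  have hδ := hD.eps_le
  have h2 := hD.abs_gE_dd_ham_sub_le hD.abs_gE_mono_singleton_sub_le s
  have h3 := hD.gVar_dd_ham_le s
  rw [gE_sub_const_sq]
  generalize ε = e at *
  generalize 2 * e / (1 - ρ) = d at *
  have h4 : |gE (ham T c) (dd s (ham T c)) - θ| ≤ 13 / 2 * d := by nlinarith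
  have h5 : (gE (ham T c) (dd s (ham T c)) - θ) ^ 2 ≤ (13 / 2 * d) ^ 2 := by
    rw [← sq_abs]; gcongr
  nlinarith

lemma gE_condProb_sub_sq_le (s : I) :
    gE (ham T c) (fun y => (condProb (ham T c) s y - p) ^ 2) ≤ (7 * (δ)) ^ 2 := by
  refine (gE_mono _ fun y => ?_).trans (hD.gE_dd_ham_sub_sq_le s)
  rw [← hD.sigmoid_eq, ← sq_abs, ← sq_abs (dd s (ham T c) y - θ)]
  refine pow_le_pow_left₀ (abs_nonneg _) ((abs_sigmoid_sub_le _ _).trans ?_) 2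
  linarith [abs_nonneg (dd s (ham T c) y - θ)]

end IsDobrushin
end Polynomial

section Remainder

variable {I : Type*} [DecidableEq I] {A : Type*} [Fintype A] (T : A → Finset I) (c : A → ℝ)

/-- The total second-order influence on the coordinate `t`. -/
def influence (t : I) (y : I → Bool) : ℝ :=
  ∑ α with t ∈ T α, c α * ∑ s ∈ (T α).erase t, mono (((T α).erase t).erase s) y

lemma sum_dd_dd_ham [Fintype I] (t : I) (y : I → Bool) :
    ∑ s ∈ univ.erase t, dd t (dd s (ham T c)) y = influence T c t y := by
  unfold influence
  simp only [mul_sum]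
  have h1 : ∀ s ∈ univ.erase t, dd t (dd s (ham T c)) y =
      ∑ α with s ∈ T α ∧ t ∈ T α, c α * mono (((T α).erase t).erase s) y := by
    intro s hs
    rw [dd_dd_ham T c (ne_of_mem_erase hs).symm]
    simp only [erase_right_comm]
  rw [sum_congr rfl h1]
  refine sum_comm' fun s α => ?_
  simp only [mem_filter, mem_univ, true_and, mem_erase, and_true]
  tauto

lemma abs_dd_mono_le (S : Finset I) (r : I) (y : I → Bool) :
    |dd r (mono S) y| ≤ if r ∈ S then 1 else 0 := by
  rw [dd_mono]
  split_ifs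
  · exact abs_mono_le_one _ _
  · simp

lemma dd_influence_self (t : I) (y : I → Bool) : dd t (influence T c t) y = 0 := by
  unfold influence
  simp [dd_sum, dd_const_mul, dd_mono]

lemma abs_dd_influence_le {m : ℝ} (hm : ∀ α, ((T α).card : ℝ) ≤ m) {r t : I}
    (y : I → Bool) : |dd r (influence T c t) y| ≤ m * jointWeight T c t r := by
  unfold influence jointWeight
  simp only [dd_sum, dd_const_mul]
  rw [← filter_filter, sum_filter (fun α => r ∈ T α), mul_sum]
  refine (abs_sum_le_sum_abs _ _).trans (sum_le_sum fun α _ => ?_)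
  rw [abs_mul, mul_comm m]
  have h1 : |∑ s ∈ (T α).erase t, dd r (mono (((T α).erase t).erase s)) y| ≤
      ∑ s ∈ (T α).erase t, if r ∈ T α then 1 else 0 := by
    refine (abs_sum_le_sum_abs _ _).trans (sum_le_sum fun s _ => ?_)
    refine (abs_dd_mono_le _ r y).trans ?_
    by_cases hr : r ∈ T α
    · simp only [hr, if_true]; split_ifs <;> norm_num
    · simp [hr]
  split_ifs at h1 ⊢ with hr
  · refine mul_le_mul_of_nonneg_left (h1.trans ?_) (abs_nonneg _)
    rw [sum_const, nsmul_eq_mul, mul_one]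
    refine le_trans ?_ (hm α)
    exact_mod_cast card_le_card (erase_subset _ _)
  · simp only [sum_const_zero] at h1
    rw [le_antisymm h1 (abs_nonneg _)]
    simp

namespace IsDobrushin

variable [Fintype I] {T c} {ρ K m η p θ θ' : ℝ} (hD : IsDobrushin T c ρ K m η p θ θ')

include hD

local notation "ε" => K / (1 - ρ) * √η
local notation "δ" => 2 * (K / (1 - ρ) * √η) / (1 - ρ)

lemma delta_pos : 0 < δ := by
  linarith [hD.eps_le, hD.eps_pos]

lemma gVar_influence_le (t : I) : gVar (ham T c) (influence T c t) ≤ m ^ 2 * ε ^ 2 :=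
  hD.gVar_le_of_local (dd_influence_self T c t)
    fun _ _ y => abs_dd_influence_le T c hD.card_le y

lemma abs_gE_influence_sub_le (t : I) :
    |gE (ham T c) (influence T c t) - θ'| ≤ 4 * ρ * (m * (ε + δ)) + ε := by
  have hε := hD.eps_pos
  have hδ := hD.delta_pos
  have hm := hD.one_le_m
  have e : gE (ham T c) (influence T c t) = ∑ α with t ∈ T α,
      c α * ∑ s ∈ (T α).erase t, gE (ham T c) (mono (((T α).erase t).erase s)) := by
    unfold influence
    simp only [gE_sum, gE_const_mul]
  rw [e]
  refine (abs_sub_le _ (∑ α with t ∈ T α,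
    c α * ((((T α).card : ℝ) - 1) * p ^ ((T α).card - 2))) _).trans
    (add_le_add ?_ ((hD.second_order t).trans hD.mul_eta_le_eps))
  rw [← sum_sub_distrib]
  calc _ ≤ ∑ α with t ∈ T α, |c α| * (((T α).card : ℝ) - 1) * (m * (ε + δ)) := by
        refine (abs_sum_le_sum_abs _ _).trans (sum_le_sum fun α hα => ?_)
        have ht := (mem_filter.1 hα).2
        have hcard : (((T α).erase t).card : ℝ) = ((T α).card : ℝ) - 1 := by
          rw [card_erase_of_mem ht, Nat.cast_sub (Finset.card_pos.2 ⟨t, ht⟩), Nat.cast_one]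
        rw [← mul_sub, abs_mul, mul_assoc]
        refine mul_le_mul_of_nonneg_left ?_ (abs_nonneg _)
        have e2 : (((T α).card : ℝ) - 1) * p ^ ((T α).card - 2) =
            ∑ s ∈ (T α).erase t, p ^ ((T α).card - 2) := by
          rw [sum_const, nsmul_eq_mul, hcard]
        rw [e2, ← sum_sub_distrib, ← hcard]
        refine (abs_sum_le_sum_abs _ _).trans ?_
        rw [← nsmul_eq_mul]
        refine sum_le_card_nsmul _ _ _ fun s hs => ?_
        have h3 := hD.abs_gE_mono_sub_pow_le hD.abs_gE_mono_singleton_sub_le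
          (((T α).erase t).erase s)
        have h4 : (((T α).erase t).erase s).card = (T α).card - 2 := by
          rw [card_erase_of_mem hs, card_erase_of_mem ht]; omega
        rw [h4] at h3
        refine h3.trans ?_
        have h5 : (((T α).card - 2 : ℕ) : ℝ) ≤ m :=
          le_trans (by exact_mod_cast Nat.sub_le _ _) (hD.card_le α)
        gcongr
    _ ≤ _ := by
        rw [← sum_mul, sum_abs_coeff_mul]
        gcongr
        exact hD.sum_jointWeight_le t

lemma gE_influence_sub_sq_le (t : I) :
    gE (ham T c) (fun y => (influence T c t y - θ') ^ 2) ≤ (8 * m * (δ)) ^ 2 := by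
  have h1 := hD.ρ_lt_one
  have h0 := hD.ρ_nonneg
  have hm := hD.one_le_m
  have hε := hD.eps_pos
  have hδ := hD.eps_le
  have h2 := hD.abs_gE_influence_sub_le t
  have h3 := hD.gVar_influence_le t
  rw [gE_sub_const_sq]
  generalize ε = e at *
  generalize 2 * e / (1 - ρ) = d at *
  have hd : 0 < d := by linarith
  have h4 : |gE (ham T c) (influence T c t) - θ'| ≤ 7 * (m * d) := by
    have h5 : 4 * ρ * (m * (e + d)) ≤ 4 * 1 * (m * (d / 2 + d)) := by gcongr; linarith
    nlinarith
  have h6 : (gE (ham T c) (influence T c t) - θ') ^ 2 ≤ (7 * (m * d)) ^ 2 := by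
    rw [← sq_abs]; gcongr
  have h7 : m ^ 2 * e ^ 2 ≤ m ^ 2 * d ^ 2 := by gcongr; linarith
  nlinarith [sq_nonneg (m * d)]

/-- The nonlinear part of the sum of the conditional probabilities. -/
def remainder (h : (I → Bool) → ℝ) (a : ℝ) (y : I → Bool) : ℝ :=
  ∑ s, condProb h s y - a * ∑ s, mono {s} y

omit hD in
lemma dd_remainder (h : (I → Bool) → ℝ) (a : ℝ) (t : I) (y : I → Bool) :
    dd t (remainder h a) y = ∑ s ∈ univ.erase t, dd t (condProb h s) y - a := by
  have e : dd t (remainder h a) y =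
      ∑ s, dd t (condProb h s) y - a * ∑ s, dd t (mono {s}) y := by
    simp only [dd, remainder, sum_sub_distrib]
    ring
  rw [e, ← add_sum_erase _ _ (mem_univ t), dd_condProb_self, zero_add]
  congr 1
  have : ∑ s, dd t (mono {s}) y = 1 := by
    simp only [dd_mono, mem_singleton]
    rw [sum_ite_eq, if_pos (mem_univ t)]
    simp [mono]
  rw [this, mul_one]

lemma abs_dd_condProb_sub_le {s t : I} (hst : t ≠ s) (y : I → Bool) :
    |dd t (condProb (ham T c) s) y - p * (1 - p) * dd t (dd s (ham T c)) y| ≤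
      jointWeight T c s t * (2 * |dd s (ham T c) y - θ| + ε) := by
  have h1 := abs_sigmoid_sub_linear_le θ (dd s (ham T c) (Function.update y t true))
    (dd s (ham T c) (Function.update y t false))
  rw [hD.sigmoid_eq] at h1
  refine h1.trans ?_
  have h2 : |dd s (ham T c) (Function.update y t true) -
      dd s (ham T c) (Function.update y t false)| ≤ jointWeight T c s t :=
    abs_dd_dd_ham_le T c hst y
  have h2' := h2.trans ((hD.jointWeight_le s t hst).trans hD.mul_eta_le_eps)
  have hJ := jointWeight_nonneg T c s t
  refine mul_le_mul h2 ?_ (by positivity) hJ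
  cases hy : y t
  · have e : Function.update y t false = y := by rw [← hy]; simp
    rw [e] at h2' ⊢
    linarith [abs_sub_le (dd s (ham T c) (Function.update y t true)) (dd s (ham T c) y) θ]
  · have e : Function.update y t true = y := by rw [← hy]; simp
    rw [e, abs_sub_comm] at h2'
    rw [e]
    linarith [abs_sub_le (dd s (ham T c) (Function.update y t false)) (dd s (ham T c) y) θ]

lemma gE_dd_remainder_sq_le (t : I) :
    gE (ham T c) (fun y => dd t (remainder (ham T c) (p * (1 - p) * θ')) y ^ 2) ≤
      (120 * m * (δ)) ^ 2 := by
  have hp0 := hD.p_pos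
  have hp1 := hD.p_lt_one
  have h1 := hD.ρ_lt_one
  have h0 := hD.ρ_nonneg
  have hm := hD.one_le_m
  have hε := hD.eps_pos
  have hδ := hD.eps_le
  have hJ0 : ∀ s, 0 ≤ jointWeight T c s t := fun s => jointWeight_nonneg T c s t
  have hJs : ∑ s ∈ univ.erase t, jointWeight T c s t ≤ 4 := by
    simp only [jointWeight_comm T c _ t]
    linarith [hD.sum_jointWeight_le t]
  set D : I → (I → Bool) → ℝ := fun s y => 2 * |dd s (ham T c) y - θ| + ε with hDdef
  set E : (I → Bool) → ℝ := fun y => ∑ s ∈ univ.erase t, jointWeight T c s t * D s y with hE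
  have hpt : ∀ y, |dd t (remainder (ham T c) (p * (1 - p) * θ')) y| ≤
      |influence T c t y - θ'| + E y := by
    intro y
    rw [dd_remainder]
    have e : ∑ s ∈ univ.erase t, dd t (condProb (ham T c) s) y - p * (1 - p) * θ' =
        p * (1 - p) * (influence T c t y - θ') + ∑ s ∈ univ.erase t,
        (dd t (condProb (ham T c) s) y - p * (1 - p) * dd t (dd s (ham T c)) y) := by
      rw [sum_sub_distrib, ← mul_sum, sum_dd_dd_ham]
      ring
    rw [e]
    refine (abs_add_le _ _).trans (add_le_add ?_ ?_)
    · rw [abs_mul]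
      refine mul_le_of_le_one_left (abs_nonneg _) ?_
      rw [abs_of_nonneg (mul_nonneg hp0.le (by linarith))]
      nlinarith
    · exact (abs_sum_le_sum_abs _ _).trans (sum_le_sum fun s hs =>
        hD.abs_dd_condProb_sub_le (ne_of_mem_erase hs).symm y)
  have hDsq : ∀ s, gE (ham T c) (fun y => D s y ^ 2) ≤ 394 * (δ) ^ 2 := by
    intro s
    have h2 := hD.gE_dd_ham_sub_sq_le s
    calc _ ≤ gE (ham T c) (fun y => 8 * (dd s (ham T c) y - θ) ^ 2 + 2 * ε ^ 2) := by
          refine gE_mono _ fun y => ?_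
          rw [← sq_abs (_ - θ)]
          simp only [hDdef]
          nlinarith [sq_nonneg (2 * |dd s (ham T c) y - θ| - ε)]
      _ ≤ _ := by
          rw [gE_add, gE_const_mul, gE_const]
          generalize ε = e at *
          generalize 2 * e / (1 - ρ) = d at *
          nlinarith
  have hEsq : gE (ham T c) (fun y => E y ^ 2) ≤ 16 * (394 * (δ) ^ 2) := by
    calc _ ≤ gE (ham T c) (fun y =>
          4 * ∑ s ∈ univ.erase t, jointWeight T c s t * D s y ^ 2) := by
          refine gE_mono _ fun y => ?_
          have h3 := sum_sq_le_sum_mul_sum_of_sq_le_mul (univ.erase t)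
            (r := fun s => jointWeight T c s t * D s y) (f := fun s => jointWeight T c s t)
            (g := fun s => jointWeight T c s t * D s y ^ 2) (fun s _ => hJ0 s)
            (fun s _ => mul_nonneg (hJ0 s) (sq_nonneg _)) (fun s _ => le_of_eq (by ring))
          refine h3.trans (mul_le_mul_of_nonneg_right hJs ?_)
          exact sum_nonneg fun s _ => mul_nonneg (hJ0 s) (sq_nonneg _)
      _ ≤ 4 * ∑ s ∈ univ.erase t, jointWeight T c s t * (394 * (δ) ^ 2) := by
          rw [gE_const_mul, gE_sum]
          simp only [gE_const_mul]
          gcongr with s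
          · exact hJ0 s
          · exact hDsq s
      _ ≤ 4 * (4 * (394 * (δ) ^ 2)) := by
          rw [← sum_mul]; gcongr
      _ = _ := by ring
  calc _ ≤ gE (ham T c) (fun y => 2 * (influence T c t y - θ') ^ 2 + 2 * E y ^ 2) := by
        refine gE_mono _ fun y => ?_
        rw [← sq_abs, ← sq_abs (_ - θ')]
        refine (pow_le_pow_left₀ (abs_nonneg _) (hpt y) 2).trans ?_
        nlinarith [sq_nonneg (|influence T c t y - θ'| - E y)]
    _ ≤ 2 * (8 * m * (δ)) ^ 2 + 2 * (16 * (394 * (δ) ^ 2)) := by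
        rw [gE_add, gE_const_mul, gE_const_mul]
        have := hD.gE_influence_sub_sq_le t
        gcongr
    _ ≤ _ := by
        generalize δ = d
        have : 1 * d ^ 2 ≤ m ^ 2 * d ^ 2 := by gcongr; exact one_le_pow₀ hm
        nlinarith

lemma gVar_remainder_le :
    gVar (ham T c) (remainder (ham T c) (p * (1 - p) * θ')) ≤
      1 / (4 * (1 - ρ)) * (Fintype.card I * (120 * m * (δ)) ^ 2) :=
  hD.gVar_le_of_sq_le hD.gE_dd_remainder_sq_le

lemma gE_sum_mono_sub_condProb_sq_le :
    gE (ham T c) (fun y => (∑ s, (mono {s} y - condProb (ham T c) s y)) ^ 2) ≤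
      1 / (4 * (1 - ρ)) * (Fintype.card I * 2 ^ 2) := by
  set F : (I → Bool) → ℝ := fun y => ∑ s, (mono {s} y - condProb (ham T c) s y) with hF
  have hmean : gE (ham T c) F = 0 := by
    rw [hF, gE_sum]
    refine sum_eq_zero fun s _ => ?_
    rw [gE_sub, gE_condProb, sub_self]
  have hR : ∀ y, F y = -remainder (ham T c) 1 y := fun y => by
    simp [hF, remainder, sum_sub_distrib]
  have e : gE (ham T c) (fun y => F y ^ 2) = gVar (ham T c) F := by
    simp [gVar, hmean]
  rw [e]
  refine hD.gVar_le_of_sq_le fun t => gE_le_of_le _ fun y => ?_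
  have e2 : dd t F y = 1 - ∑ s ∈ univ.erase t, dd t (condProb (ham T c) s) y := by
    have := dd_remainder (ham T c) 1 t y
    rw [show dd t F y = -dd t (remainder (ham T c) 1) y by simp [dd, hR]; ring, this]
    ring
  have h2 : |∑ s ∈ univ.erase t, dd t (condProb (ham T c) s) y| ≤ 1 := by
    refine (abs_sum_le_sum_abs _ _).trans ?_
    calc _ ≤ ∑ s ∈ univ.erase t, 1 / 4 * jointWeight T c t s := by
          refine sum_le_sum fun s hs => ?_
          rw [jointWeight_comm]
          exact abs_dd_condProb_ham_le T c (ne_of_mem_erase hs).symm y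
      _ ≤ 1 := by
          rw [← mul_sum]
          linarith [hD.sum_jointWeight_le t, hD.ρ_lt_one]
  rw [abs_le] at h2
  rw [e2]
  exact sq_le_sq' (by linarith) (by linarith)

end IsDobrushin
end Remainder

section SteinBound

variable {I : Type*} [DecidableEq I] [Fintype I]

lemma gE_mono_sub_condProb_mul (h : (I → Bool) → ℝ) (s : I) (F : (I → Bool) → ℝ) :
    gE h (fun y => (mono {s} y - condProb h s y) * F y) =
      gE h (fun y => condProb h s y * (1 - condProb h s y) * dd s F y) := by
  rw [← gE_resample h s]
  congr 1
  ext y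
  simp [resample, condProb_update, mono, dd]
  ring

/-- The number of present coordinates, centred under the Gibbs measure and divided by `σ`. -/
def stdSum (h : (I → Bool) → ℝ) (σ : ℝ) (y : I → Bool) : ℝ :=
  (∑ s, mono {s} y - gE h (fun y => ∑ s, mono {s} y)) / σ

lemma sum_mono_singleton_update (s : I) (y : I → Bool) :
    ∑ t, mono {t} (Function.update y s true) =
      ∑ t, mono {t} (Function.update y s false) + 1 := by
  have h : ∀ b, ∑ t, mono {t} (Function.update y s b) =
      mono {s} (Function.update y s b) + ∑ t ∈ univ.erase s, mono {t} y := fun b => by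
    rw [← add_sum_erase _ _ (mem_univ s)]
    congr 1
    exact sum_congr rfl fun t ht =>
      mono_update_of_notMem (by simpa using (ne_of_mem_erase ht).symm) y b
  rw [h, h]
  simp [mono]
  ring

lemma stdSum_update (h : (I → Bool) → ℝ) (σ : ℝ) (s : I) (y : I → Bool) :
    stdSum h σ (Function.update y s true) = stdSum h σ (Function.update y s false) + σ⁻¹ := by
  rw [stdSum, stdSum, sum_mono_singleton_update]
  ring

open IsDobrushin in
lemma mul_stdSum {h : (I → Bool) → ℝ} {σ : ℝ} (hσ : σ ≠ 0) (a : ℝ) (y : I → Bool) :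
    (1 - a) * σ * stdSum h σ y = ∑ s, (mono {s} y - condProb h s y) +
      (remainder h a y - gE h (remainder h a)) := by
  have hm : gE h (remainder h a) = (1 - a) * gE h (fun y => ∑ s, mono {s} y) := by
    have e : gE h (fun y => ∑ s, condProb h s y) = gE h (fun y => ∑ s, mono {s} y) := by
      rw [gE_sum, gE_sum]
      exact sum_congr rfl fun s _ => gE_condProb h s
    unfold remainder
    rw [gE_sub, gE_const_mul, e]
    ring
  rw [hm, stdSum, remainder, sum_sub_distrib]
  field_simp
  ring

/-- The constant in the Stein bound for the normalized number of present coordinates. -/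
def steinConst (ρ K m p κ : ℝ) : ℝ :=
  (14 * K / (1 - ρ) ^ 2 + K / (1 - ρ) + K / κ + 240 * m * K * κ / (1 - ρ) ^ 3) / (p * (1 - p))

end SteinBound

section SteinBound

variable {I : Type*} [DecidableEq I] [Fintype I] {A : Type*} [Fintype A]
  {T : A → Finset I} {c : A → ℝ} {ρ K m η p θ θ' : ℝ}

namespace IsDobrushin

variable (hD : IsDobrushin T c ρ K m η p θ θ')
include hD

lemma steinConst_pos {κ : ℝ} (hκ : 0 < κ) : 0 < steinConst ρ K m p κ := by
  have h1 : 0 < 1 - ρ := sub_pos.2 hD.ρ_lt_one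
  have h2 : 0 < 1 - p := sub_pos.2 hD.p_lt_one
  have h3 := hD.p_pos
  have h4 : 0 < K := by linarith [hD.one_le_K]
  have h5 : 0 < m := by linarith [hD.one_le_m]
  unfold steinConst
  positivity

theorem abs_gE_stein_le {κ σ B : ℝ} (hκ : 0 < κ)
    (hκ2 : κ ^ 2 * (1 - p * (1 - p) * θ') = p * (1 - p))
    (hσ : σ = κ * √(Fintype.card I)) {f g G : ℝ → ℝ} (hB : 0 ≤ B)
    (hf : ∀ x, |f x| ≤ B) (hg : ∀ x, |g x| ≤ B) (hG : ∀ x, |G x| ≤ B)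
    (h0 : ∀ x, |f (x + σ⁻¹) - f x - σ⁻¹ * g x| ≤ σ⁻¹ * (G (x + σ⁻¹) - G x) + B * σ⁻¹ ^ 2)
    (h1 : ∀ x, |f (x + σ⁻¹) - f x - σ⁻¹ * g (x + σ⁻¹)| ≤
      σ⁻¹ * (G (x + σ⁻¹) - G x) + B * σ⁻¹ ^ 2) :
    |gE (ham T c) (fun y => g (stdSum (ham T c) σ y) -
      stdSum (ham T c) σ y * f (stdSum (ham T c) σ y))| ≤
      B * steinConst ρ K m p κ * √η := by
  set h := ham T c with hh
  set W := stdSum h σ with hW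
  set a := p * (1 - p) * θ' with ha
  set P := p * (1 - p) with hP
  set N : ℝ := (Fintype.card I : ℝ) with hN
  set D := 2 * (K / (1 - ρ) * √η) / (1 - ρ) with hDd
  have hρ : 0 < 1 - ρ := sub_pos.2 hD.ρ_lt_one
  have hρ1 : 1 - ρ ≤ 1 := by linarith [hD.ρ_nonneg]
  have hp0 := hD.p_pos
  have hp1 : 0 < 1 - p := sub_pos.2 hD.p_lt_one
  have hPpos : 0 < P := mul_pos hp0 hp1
  have hK := hD.one_le_K
  have hm := hD.one_le_m
  have hη : 0 < √η := sqrt_pos.2 hD.η_pos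
  have hNpos : 0 < N := by
    have := hD.nonempty
    exact Nat.cast_pos.2 Fintype.card_pos
  have hsN : 0 < √N := sqrt_pos.2 hNpos
  have hsN2 : √N ^ 2 = N := sq_sqrt hNpos.le
  have hσ0 : 0 < σ := by rw [hσ]; positivity
  have hDpos : 0 < D := by positivity
  have hδ : 0 < σ⁻¹ := inv_pos.2 hσ0
  have hνσ : (1 - a) * σ = N * (P * σ⁻¹) := by
    rw [eq_comm, ← div_eq_mul_inv, ← mul_div_assoc, div_eq_iff hσ0.ne', ← hκ2, ← hsN2, hσ]
    ring
  -- the local exchange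
  have hdd : ∀ (s : I) (y : I → Bool),
      |σ⁻¹ * g (W y) - dd s (fun y => f (W y)) y| ≤
        σ⁻¹ * dd s (fun y => G (W y)) y + B * σ⁻¹ ^ 2 := by
    intro s y
    have hu := stdSum_update h σ s y
    rw [← hW] at hu
    rw [abs_sub_comm]
    simp only [dd, hu]
    cases hy : y s
    · have e : Function.update y s false = y := by rw [← hy]; simp
      rw [e]; exact h0 _
    · have e : Function.update y s true = y := by rw [← hy]; simp
      rw [e] at hu
      rw [hu]; exact h1 _
  have hq : ∀ s y, 0 ≤ condProb h s y * (1 - condProb h s y) ∧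
      condProb h s y * (1 - condProb h s y) ≤ 1 := fun s y => by
    have h2 := condProb_nonneg h s y
    have h3 := condProb_le_one h s y
    constructor <;> nlinarith
  have hT1 : |gE h (fun y => ∑ s, (P - condProb h s y * (1 - condProb h s y)) *
      (σ⁻¹ * g (W y)))| ≤ N * (7 * D * (σ⁻¹ * B)) := by
    rw [gE_sum]
    refine (abs_sum_le_sum_abs _ _).trans ?_
    refine (sum_le_card_nsmul _ _ (7 * D * (σ⁻¹ * B)) fun s _ => ?_).trans_eq
      (by rw [nsmul_eq_mul, hN, card_univ])
    refine (abs_gE_le _ _).trans ?_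
    have h2 := gE_abs_le_of_sq_le h (by positivity) (hD.gE_condProb_sub_sq_le s)
    calc _ ≤ gE h (fun y => |condProb h s y - p| * (σ⁻¹ * B)) := by
          refine gE_mono _ fun y => ?_
          rw [abs_mul, abs_mul, abs_of_pos hδ]
          refine mul_le_mul ?_ (mul_le_mul_of_nonneg_left (hg _) hδ.le) (by positivity)
            (abs_nonneg _)
          rw [show P - condProb h s y * (1 - condProb h s y) =
            (condProb h s y - p) * (condProb h s y + p - 1) by rw [hP]; ring, abs_mul]
          refine mul_le_of_le_one_right (abs_nonneg _) ?_
          have h3 := condProb_nonneg h s y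
          have h4 := condProb_le_one h s y
          rw [abs_le]
          constructor <;> linarith
      _ ≤ _ := by
          rw [gE_mul_const]
          gcongr
  have hX : gE h (fun y => |∑ s, (mono {s} y - condProb h s y)|) ≤ √N / (1 - ρ) := by
    refine gE_abs_le_of_sq_le h (by positivity) (hD.gE_sum_mono_sub_condProb_sq_le.trans ?_)
    rw [div_pow, hsN2, ← hN, show 1 / (4 * (1 - ρ)) * (N * 2 ^ 2) = N / (1 - ρ) by
      field_simp; ring]
    gcongr
    nlinarith
  have hT2 : |gE h (fun y => ∑ s, condProb h s y * (1 - condProb h s y) *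
      (σ⁻¹ * g (W y) - dd s (fun y => f (W y)) y))| ≤
      σ⁻¹ * (√N / (1 - ρ) * B) + N * (B * σ⁻¹ ^ 2) := by
    refine (abs_gE_le _ _).trans ?_
    calc _ ≤ gE h (fun y => σ⁻¹ * ∑ s, condProb h s y * (1 - condProb h s y) *
            dd s (fun y => G (W y)) y + N * (B * σ⁻¹ ^ 2)) := by
          refine gE_mono _ fun y => (abs_sum_le_sum_abs _ _).trans ?_
          rw [mul_sum, hN, ← card_univ, ← nsmul_eq_mul, ← sum_const, ← sum_add_distrib]
          refine sum_le_sum fun s _ => ?_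
          rw [abs_mul, abs_of_nonneg (hq s y).1]
          refine (mul_le_mul_of_nonneg_left (hdd s y) (hq s y).1).trans ?_
          have := mul_le_mul_of_nonneg_right (hq s y).2 (by positivity : 0 ≤ B * σ⁻¹ ^ 2)
          linarith
      _ ≤ _ := by
          rw [gE_add, gE_const, gE_const_mul, gE_sum]
          simp only [← gE_mono_sub_condProb_mul]
          rw [← gE_sum]
          gcongr
          calc _ ≤ gE h (fun y => |∑ s, (mono {s} y - condProb h s y)| * B) := by
                refine gE_mono _ fun y => ?_
                rw [← sum_mul]
                refine (le_abs_self _).trans ?_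
                rw [abs_mul]
                gcongr
                exact hG _
            _ ≤ _ := by
                rw [gE_mul_const]
                gcongr
  have hT3 : |gE h (fun y => (remainder h a y - gE h (remainder h a)) * f (W y))| ≤
      √N / (1 - ρ) * (120 * m * D) * B := by
    refine (abs_gE_le _ _).trans ?_
    calc _ ≤ gE h (fun y => |remainder h a y - gE h (remainder h a)| * B) := by
          refine gE_mono _ fun y => ?_
          rw [abs_mul]
          gcongr
          exact hf _
      _ ≤ _ := by
          rw [gE_mul_const]
          gcongr
          refine gE_abs_le_of_sq_le h (by positivity) (hD.gVar_remainder_le.trans ?_)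
          rw [mul_pow (√N / (1 - ρ)), div_pow (√N), hsN2, ← hN,
            show 1 / (4 * (1 - ρ)) * (N * (120 * m * D) ^ 2) =
              N / (4 * (1 - ρ)) * (120 * m * D) ^ 2 by ring]
          gcongr
          nlinarith
  have key : (1 - a) * σ * gE h (fun y => g (W y) - W y * f (W y)) =
      gE h (fun y => ∑ s, (P - condProb h s y * (1 - condProb h s y)) * (σ⁻¹ * g (W y))) +
      gE h (fun y => ∑ s, condProb h s y * (1 - condProb h s y) *
        (σ⁻¹ * g (W y) - dd s (fun y => f (W y)) y)) -
      gE h (fun y => (remainder h a y - gE h (remainder h a)) * f (W y)) := by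
    have e1 : gE h (fun y => (∑ s, (mono {s} y - condProb h s y)) * f (W y)) =
        gE h (fun y => ∑ s, condProb h s y * (1 - condProb h s y) *
          dd s (fun y => f (W y)) y) := by
      simp only [sum_mul]
      rw [gE_sum, gE_sum]
      exact sum_congr rfl fun s _ => gE_mono_sub_condProb_mul h s _
    have e2 : (fun y => (1 - a) * σ * (g (W y) - W y * f (W y))) = fun y =>
        N * (P * σ⁻¹) * g (W y) - (((∑ s, (mono {s} y - condProb h s y)) * f (W y)) +
          (remainder h a y - gE h (remainder h a)) * f (W y)) := by
      ext y
      have := mul_stdSum (h := h) hσ0.ne' a y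
      rw [← hW] at this
      rw [← hνσ]
      linear_combination -f (W y) * this
    have e3 : (fun y => ∑ s, (P - condProb h s y * (1 - condProb h s y)) * (σ⁻¹ * g (W y))) =
        fun y => N * (P * σ⁻¹) * g (W y) -
          ∑ s, condProb h s y * (1 - condProb h s y) * (σ⁻¹ * g (W y)) := by
      ext y
      simp only [sub_mul, sum_sub_distrib, sum_const, card_univ, nsmul_eq_mul, ← hN]
      ring
    rw [← gE_const_mul, e2, gE_sub, gE_add, e1, e3, gE_sub]
    simp only [mul_sub, sum_sub_distrib]
    rw [gE_sub]
    ring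
  have hNη : 1 ≤ K * √η * √N := by
    have h2 := hD.one_le_card
    rw [← one_le_sq_iff₀ (by positivity), mul_pow, mul_pow, hsN2, sq_sqrt hD.η_pos.le]
    rw [← hN] at h2
    have := hD.η_pos
    calc 1 ≤ K * η * N := h2
      _ ≤ K ^ 2 * η * N := by gcongr; nlinarith
  have hpos : 0 < N * (P * σ⁻¹) := by positivity
  rw [← mul_le_mul_iff_of_pos_left hpos, ← abs_of_pos hpos, ← abs_mul, abs_of_pos hpos, ← hνσ,
    key, hνσ]
  refine (abs_sub _ _).trans ((add_le_add (abs_add_le _ _) le_rfl).trans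
    ((add_le_add (add_le_add hT1 hT2) hT3).trans ?_))
  have e : N * (P * σ⁻¹) * (B * steinConst ρ K m p κ * √η) =
      B * (N * (7 * D * σ⁻¹) + √N / (1 - ρ) * σ⁻¹ * (K * √η * √N) +
        N * σ⁻¹ ^ 2 * (K * √η * √N) + √N / (1 - ρ) * (120 * m * D)) := by
    obtain ⟨r, hr⟩ : ∃ r, √N = r := ⟨_, rfl⟩
    rw [steinConst, ← hP, hDd, hσ, hr, ← hsN2, hr]
    rw [hr] at hsN
    field_simp
    ring
  rw [e]
  have f1 : √N / (1 - ρ) * σ⁻¹ * 1 ≤ √N / (1 - ρ) * σ⁻¹ * (K * √η * √N) := by gcongr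
  have f2 : N * σ⁻¹ ^ 2 * 1 ≤ N * σ⁻¹ ^ 2 * (K * √η * √N) := by gcongr
  calc _ = B * (N * (7 * D * σ⁻¹) + √N / (1 - ρ) * σ⁻¹ * 1 +
        N * σ⁻¹ ^ 2 * 1 + √N / (1 - ρ) * (120 * m * D)) := by ring
    _ ≤ _ := by gcongr

end IsDobrushin
end SteinBound

section GaussTail

/-- `exp (x² / 2)` times the integral of `k` against `exp (-y² / 2)` over `(x, ∞)`. -/
def gaussTail (k : ℝ → ℝ) (x : ℝ) : ℝ :=
  ∫ u in Set.Ioi 0, k (x + u) * exp (-(x * u + u ^ 2 / 2))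

/-- The moments `∫₀^∞ u^j exp (-(x u + u² / 2)) du`. -/
def millsMoment (j : ℕ) (x : ℝ) : ℝ :=
  ∫ u in Set.Ioi 0, u ^ j * exp (-(x * u + u ^ 2 / 2))

lemma gaussTail_one (x : ℝ) : gaussTail (fun _ => 1) x = millsMoment 0 x := by
  simp [gaussTail, millsMoment]

lemma gaussTail_eq (k : ℝ → ℝ) (x : ℝ) :
    gaussTail k x = exp (x ^ 2 / 2) * ∫ y in Set.Ioi x, k y * exp (-y ^ 2 / 2) := by
  have h := (measurePreserving_add_left volume x).setIntegral_preimage_emb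
    (measurableEmbedding_addLeft x) (fun y => k y * exp (-y ^ 2 / 2)) (Set.Ioi x)
  rw [Set.preimage_const_add_Ioi, sub_self] at h
  rw [← h, ← integral_const_mul, gaussTail]
  refine integral_congr_ae (Filter.Eventually.of_forall fun u => ?_)
  simp only
  rw [mul_left_comm, ← exp_add]
  ring_nf

lemma hasDerivAt_gaussTail {k : ℝ → ℝ} (hk : Continuous k)
    (hi : Integrable fun y => k y * exp (-y ^ 2 / 2)) (x : ℝ) :
    HasDerivAt (gaussTail k) (x * gaussTail k x - k x) x := by
  have hc : Continuous fun y => k y * exp (-y ^ 2 / 2) := by fun_prop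
  have e : gaussTail k = fun x => exp (x ^ 2 / 2) *
      ((∫ y in Set.Ioi 0, k y * exp (-y ^ 2 / 2)) - ∫ y in 0..x, k y * exp (-y ^ 2 / 2)) := by
    ext x
    rw [gaussTail_eq, ← intervalIntegral.integral_interval_add_Ioi (a := 0) (b := x)
      hi.integrableOn hi.integrableOn]
    ring
  have h1 : HasDerivAt (fun x : ℝ => exp (x ^ 2 / 2)) (exp (x ^ 2 / 2) * x) x := by
    have h2 : HasDerivAt (fun x : ℝ => x ^ 2 / 2) x x := by
      simpa using (hasDerivAt_pow 2 x).div_const 2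
    exact h2.exp
  have h3 := (hc.integral_hasStrictDerivAt 0 x).hasDerivAt
  have h4 := h1.mul (h3.const_sub (∫ y in Set.Ioi 0, k y * exp (-y ^ 2 / 2)))
  rw [e]
  refine h4.congr_deriv ?_
  have h5 : exp (x ^ 2 / 2) * exp (-x ^ 2 / 2) = 1 := by
    rw [← exp_add]; ring_nf; exact exp_zero
  linear_combination (-k x) * h5

lemma gaussTail_neg {k : ℝ → ℝ} (hi : Integrable fun y => k y * exp (-y ^ 2 / 2)) (x : ℝ) :
    gaussTail (fun y => k (-y)) (-x) =
      exp (x ^ 2 / 2) * (∫ y, k y * exp (-y ^ 2 / 2)) - gaussTail k x := by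
  rw [gaussTail_eq, gaussTail_eq]
  have h1 := integral_comp_neg_Ioi (-x) (fun y => k y * exp (-y ^ 2 / 2))
  simp only [neg_neg, neg_sq] at h1 ⊢
  rw [h1, ← intervalIntegral.integral_Iic_add_Ioi (b := x) hi.integrableOn hi.integrableOn]
  ring

lemma pow_mul_exp_le (j : ℕ) (x : ℝ) {u : ℝ} (hu : 0 ≤ u) :
    u ^ j * exp (-(x * u + u ^ 2 / 2)) ≤
      j.factorial * exp ((1 - x) ^ 2) * exp (-(1 / 4) * u ^ 2) := by
  have h1 := Real.pow_div_factorial_le_exp u hu j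
  rw [div_le_iff₀ (by positivity)] at h1
  calc _ ≤ exp u * j.factorial * exp (-(x * u + u ^ 2 / 2)) := by gcongr
    _ = j.factorial * exp (u - (x * u + u ^ 2 / 2)) := by
        rw [sub_eq_add_neg u, exp_add]; ring
    _ ≤ j.factorial * exp ((1 - x) ^ 2 + -(1 / 4) * u ^ 2) := by
        gcongr
        nlinarith [sq_nonneg ((1 - x) - u / 2)]
    _ = _ := by rw [exp_add]; ring

lemma integrableOn_pow_mul_exp (j : ℕ) (x : ℝ) :
    IntegrableOn (fun u => u ^ j * exp (-(x * u + u ^ 2 / 2))) (Set.Ioi 0) := by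
  have h := ((integrable_exp_neg_mul_sq (b := 1 / 4) (by norm_num)).const_mul
    (j.factorial * exp ((1 - x) ^ 2))).integrableOn (s := Set.Ioi 0)
  refine Integrable.mono' h (by fun_prop) ?_
  filter_upwards [ae_restrict_mem measurableSet_Ioi] with u hu
  have hu' : 0 ≤ u := le_of_lt hu
  rw [norm_of_nonneg (by positivity)]
  exact pow_mul_exp_le j x hu'

lemma millsMoment_nonneg (j : ℕ) (x : ℝ) : 0 ≤ millsMoment j x :=
  setIntegral_nonneg measurableSet_Ioi fun u hu => by
    have : 0 ≤ u := le_of_lt hu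
    positivity

lemma millsMoment_antitone (j : ℕ) : Antitone (millsMoment j) := fun x x' hx =>
  setIntegral_mono_on (integrableOn_pow_mul_exp j x') (integrableOn_pow_mul_exp j x)
    measurableSet_Ioi fun u hu => by
      have hu : 0 ≤ u := le_of_lt hu
      gcongr

lemma mul_millsMoment_zero_add (x : ℝ) : x * millsMoment 0 x + millsMoment 1 x = 1 := by
  have hd : ∀ u : ℝ, HasDerivAt (fun u => -exp (-(x * u + u ^ 2 / 2)))
      (x * (u ^ 0 * exp (-(x * u + u ^ 2 / 2))) + u ^ 1 * exp (-(x * u + u ^ 2 / 2))) u := by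
    intro u
    have h1 : HasDerivAt (fun u => -(x * u + u ^ 2 / 2)) (-(x + u)) u := by
      have := ((hasDerivAt_id u).const_mul x).add ((hasDerivAt_pow 2 u).div_const 2)
      refine this.neg.congr_deriv ?_
      simp
    refine h1.exp.neg.congr_deriv ?_
    ring
  have hi := ((integrableOn_pow_mul_exp 0 x).const_mul x).add (integrableOn_pow_mul_exp 1 x)
  have hl := tendsto_zero_of_hasDerivAt_of_integrableOn_Ioi (fun u _ => hd u) hi
    (by simpa using (integrableOn_pow_mul_exp 0 x).neg)
  have h := integral_Ioi_of_hasDerivAt_of_tendsto' (fun u _ => hd u) hi hl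
  rw [integral_add ((integrableOn_pow_mul_exp 0 x).const_mul x) (integrableOn_pow_mul_exp 1 x),
    integral_const_mul] at h
  simpa [millsMoment] using h

lemma mul_millsMoment_one_add (x : ℝ) :
    x * millsMoment 1 x + millsMoment 2 x = millsMoment 0 x := by
  have hd : ∀ u : ℝ, HasDerivAt (fun u => -(u ^ 1 * exp (-(x * u + u ^ 2 / 2))))
      (x * (u ^ 1 * exp (-(x * u + u ^ 2 / 2))) + u ^ 2 * exp (-(x * u + u ^ 2 / 2)) -
        u ^ 0 * exp (-(x * u + u ^ 2 / 2))) u := by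
    intro u
    have h1 : HasDerivAt (fun u => -(x * u + u ^ 2 / 2)) (-(x + u)) u := by
      have := ((hasDerivAt_id u).const_mul x).add ((hasDerivAt_pow 2 u).div_const 2)
      refine this.neg.congr_deriv ?_
      simp
    refine ((hasDerivAt_pow 1 u).mul h1.exp).neg.congr_deriv ?_
    simp
    ring
  have hi1 : IntegrableOn (fun u => x * (u ^ 1 * exp (-(x * u + u ^ 2 / 2))) +
      u ^ 2 * exp (-(x * u + u ^ 2 / 2))) (Set.Ioi 0) :=
    ((integrableOn_pow_mul_exp 1 x).const_mul x).add (integrableOn_pow_mul_exp 2 x)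
  have hi := hi1.sub (integrableOn_pow_mul_exp 0 x)
  have hl := tendsto_zero_of_hasDerivAt_of_integrableOn_Ioi (fun u _ => hd u) hi
    (integrableOn_pow_mul_exp 1 x).neg
  have h := integral_Ioi_of_hasDerivAt_of_tendsto' (fun u _ => hd u) hi hl
  rw [integral_sub hi1 (integrableOn_pow_mul_exp 0 x),
    integral_add ((integrableOn_pow_mul_exp 1 x).const_mul x) (integrableOn_pow_mul_exp 2 x),
    integral_const_mul] at h
  simp only [millsMoment]
  simp at h ⊢
  linarith

lemma integrable_exp_neg_sq_half : Integrable fun y : ℝ => exp (-y ^ 2 / 2) := by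
  convert integrable_exp_neg_mul_sq (b := 1 / 2) (by norm_num) using 3
  ring

lemma hasDerivAt_millsMoment_zero (x : ℝ) :
    HasDerivAt (millsMoment 0) (x * millsMoment 0 x - 1) x := by
  have := hasDerivAt_gaussTail (k := fun _ => 1) continuous_const
    (by simpa using integrable_exp_neg_sq_half) x
  rwa [gaussTail_one, funext gaussTail_one] at this

lemma mul_millsMoment_zero_mono : Monotone fun x => x * millsMoment 0 x := fun x x' hx => by
  linarith [mul_millsMoment_zero_add x, mul_millsMoment_zero_add x', millsMoment_antitone 1 hx]

lemma mul_millsMoment_zero_le_one (x : ℝ) : x * millsMoment 0 x ≤ 1 := by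
  linarith [mul_millsMoment_zero_add x, millsMoment_nonneg 1 x]

lemma integral_gaussianReal_zero_one (k : ℝ → ℝ) :
    ∫ z, k z ∂(gaussianReal 0 1) = (√(2 * π))⁻¹ * ∫ y, k y * exp (-y ^ 2 / 2) := by
  rw [integral_gaussianReal_eq_integral_smul one_ne_zero, ← integral_const_mul]
  refine integral_congr_ae (Filter.Eventually.of_forall fun y => ?_)
  simp [gaussianPDFReal]
  ring

lemma gaussianReal_zero_one_toReal (s : Set ℝ) :
    ((gaussianReal 0 1) s).toReal = (√(2 * π))⁻¹ * ∫ y in s, exp (-y ^ 2 / 2) := by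
  rw [gaussianReal_apply_eq_integral _ one_ne_zero, ENNReal.toReal_ofReal
    (integral_nonneg fun y => gaussianPDFReal_nonneg _ _ _), ← integral_const_mul]
  refine integral_congr_ae (Filter.Eventually.of_forall fun y => ?_)
  simp [gaussianPDFReal]

end GaussTail

section SteinSolution

/-- `f`, `g` and `G` satisfy, with bound `B`, the requirements of Stein's method for a test
function with residual `k`: `f' = g` is bounded, `g x - x f x = k x`, and the increments of `g`
are controlled by those of `G`. -/
structure IsSteinSolution (k : ℝ → ℝ) (B : ℝ) (f g G : ℝ → ℝ) : Prop where
  eq : ∀ x, g x - x * f x = k x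
  abs_f_le : ∀ x, |f x| ≤ B
  abs_g_le : ∀ x, |g x| ≤ B
  abs_G_le : ∀ x, |G x| ≤ B
  incr_left : ∀ d : ℝ, 0 < d → ∀ x,
    |f (x + d) - f x - d * g x| ≤ d * (G (x + d) - G x) + B * d ^ 2
  incr_right : ∀ d : ℝ, 0 < d → ∀ x,
    |f (x + d) - f x - d * g (x + d)| ≤ d * (G (x + d) - G x) + B * d ^ 2

/-- The absolute first moment of the standard normal distribution. -/
def gaussAbsMoment : ℝ := ∫ z, |z| ∂(gaussianReal 0 1)

lemma gaussAbsMoment_nonneg : 0 ≤ gaussAbsMoment := integral_nonneg fun _ => abs_nonneg _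

lemma integrable_lipschitz_gaussian {ψ : ℝ → ℝ} (hψ : LipschitzWith 1 ψ) :
    Integrable ψ (gaussianReal 0 1) := by
  have hid : Integrable (fun z : ℝ => z) (gaussianReal 0 1) :=
    (memLp_id_gaussianReal 1).integrable (by simp)
  refine Integrable.mono' (g := fun z => |z| + |ψ 0|) (hid.abs.add (integrable_const _))
    hψ.continuous.aestronglyMeasurable (Filter.Eventually.of_forall fun z => ?_)
  have := hψ.dist_le_mul z 0
  simp only [Real.dist_eq, NNReal.coe_one, one_mul, sub_zero] at this
  rw [Real.norm_eq_abs]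
  linarith [abs_sub_abs_le_abs_sub (ψ z) (ψ 0)]

lemma abs_sub_integral_le {ψ : ℝ → ℝ} (hψ : LipschitzWith 1 ψ) (x : ℝ) :
    |ψ x - ∫ z, ψ z ∂(gaussianReal 0 1)| ≤ |x| + gaussAbsMoment := by
  have hid : Integrable (fun z : ℝ => z) (gaussianReal 0 1) :=
    (memLp_id_gaussianReal 1).integrable (by simp)
  have e : ψ x - ∫ z, ψ z ∂(gaussianReal 0 1) = ∫ z, (ψ x - ψ z) ∂(gaussianReal 0 1) := by
    rw [integral_sub (integrable_const _) (integrable_lipschitz_gaussian hψ)]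
    simp
  have e2 : |x| + gaussAbsMoment = ∫ z, (|x| + |z|) ∂(gaussianReal 0 1) := by
    rw [integral_add (integrable_const _) hid.abs, gaussAbsMoment]
    simp
  rw [e, e2]
  refine abs_integral_le_integral_abs.trans (integral_mono
    ((integrable_const _).sub (integrable_lipschitz_gaussian hψ)).abs
    ((integrable_const _).add hid.abs) fun z => ?_)
  have := hψ.dist_le_mul x z
  simp only [Real.dist_eq, NNReal.coe_one, one_mul] at this
  exact this.trans (abs_sub _ _)

lemma integrable_mul_exp_of_lipschitz {k : ℝ → ℝ} (hk : LipschitzWith 1 k) :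
    Integrable fun y => k y * exp (-y ^ 2 / 2) := by
  have h1 : Integrable fun y : ℝ => y * exp (-y ^ 2 / 2) := by
    convert integrable_mul_exp_neg_mul_sq (b := 1 / 2) (by norm_num) using 4
    ring
  have hc := hk.continuous
  refine Integrable.mono' (h1.abs.add (integrable_exp_neg_sq_half.const_mul |k 0|))
    (by fun_prop) (Filter.Eventually.of_forall fun y => ?_)
  have := hk.dist_le_mul y 0
  simp only [Real.dist_eq, NNReal.coe_one, one_mul, sub_zero] at this
  simp only [Pi.add_apply]
  rw [Real.norm_eq_abs, abs_mul, abs_mul, abs_exp, ← add_mul]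
  gcongr
  linarith [abs_sub_abs_le_abs_sub (k y) (k 0)]

lemma gaussTail_bounds {k : ℝ → ℝ} (hk : LipschitzWith 1 k) {b : ℝ} (hb : 0 ≤ b)
    (hkb : ∀ x, |k x| ≤ |x| + b) {x : ℝ} (hx : 0 ≤ x) :
    |gaussTail k x| ≤ 1 + b * millsMoment 0 0 ∧
      |x * gaussTail k x - k x| ≤ 2 * millsMoment 0 0 + b ∧
      |x * (x * gaussTail k x - k x)| ≤ 2 + b * millsMoment 0 0 := by
  set D := ∫ u in Set.Ioi 0, (k (x + u) - k x) * exp (-(x * u + u ^ 2 / 2)) with hD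
  have hi0 : IntegrableOn (fun u => k x * exp (-(x * u + u ^ 2 / 2))) (Set.Ioi 0) := by
    have := (integrableOn_pow_mul_exp 0 x).const_mul (k x)
    simp only [pow_zero, one_mul] at this
    exact this
  have hpt : ∀ u ∈ Set.Ioi (0 : ℝ), ‖(k (x + u) - k x) * exp (-(x * u + u ^ 2 / 2))‖ ≤
      u ^ 1 * exp (-(x * u + u ^ 2 / 2)) := fun u hu => by
    have := hk.dist_le_mul (x + u) x
    simp only [Real.dist_eq, NNReal.coe_one, one_mul, add_sub_cancel_left] at this
    rw [abs_of_pos (Set.mem_Ioi.1 hu)] at this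
    rw [norm_mul, Real.norm_eq_abs, Real.norm_eq_abs, abs_exp, pow_one]
    gcongr
  have hc := hk.continuous
  have hi1 : IntegrableOn (fun u => (k (x + u) - k x) * exp (-(x * u + u ^ 2 / 2)))
      (Set.Ioi 0) := by
    refine Integrable.mono' (integrableOn_pow_mul_exp 1 x) (by fun_prop) ?_
    filter_upwards [ae_restrict_mem measurableSet_Ioi] with u hu using hpt u hu
  have hDle : |D| ≤ millsMoment 1 x := by
    rw [← Real.norm_eq_abs]
    refine norm_integral_le_of_norm_le (integrableOn_pow_mul_exp 1 x) ?_
    filter_upwards [ae_restrict_mem measurableSet_Ioi] with u hu using hpt u hu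
  have hsplit : gaussTail k x = D + k x * millsMoment 0 x := by
    have e : k x * millsMoment 0 x =
        ∫ u in Set.Ioi 0, k x * exp (-(x * u + u ^ 2 / 2)) := by
      rw [integral_const_mul]; simp [millsMoment]
    rw [e, hD, ← integral_add hi1 hi0, gaussTail]
    refine integral_congr_ae (Filter.Eventually.of_forall fun u => ?_)
    simp only
    ring
  have hkx := hkb x
  rw [abs_of_nonneg hx] at hkx
  have h0 := mul_millsMoment_zero_add x
  have h1 := mul_millsMoment_one_add x
  have p0 := millsMoment_nonneg 0 x
  have p1 := millsMoment_nonneg 1 x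
  have p2 := millsMoment_nonneg 2 x
  have hm := millsMoment_antitone 0 hx
  have hx1 : x * millsMoment 1 x ≤ millsMoment 0 x := by linarith
  have hx2 : x * (x * millsMoment 1 x) ≤ 1 := by
    have := mul_le_mul_of_nonneg_left hx1 hx
    linarith
  have hb0 : b * millsMoment 0 x ≤ b * millsMoment 0 0 := by gcongr
  have hp1 : millsMoment 1 x ≤ 1 := by nlinarith
  have hb1 : b * millsMoment 1 x ≤ b * 1 := by gcongr
  have hg : |x * gaussTail k x - k x| ≤ 2 * (x * millsMoment 1 x) + b * millsMoment 1 x := by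
    have e : x * gaussTail k x - k x = x * D - k x * millsMoment 1 x := by
      rw [hsplit]; linear_combination k x * h0
    rw [e]
    refine (abs_sub _ _).trans ?_
    rw [abs_mul, abs_mul, abs_of_nonneg hx, abs_of_nonneg p1]
    have := mul_le_mul_of_nonneg_left hDle hx
    have := mul_le_mul_of_nonneg_right hkx p1
    linarith
  refine ⟨?_, by linarith, ?_⟩
  · rw [hsplit]
    refine (abs_add_le _ _).trans ?_
    rw [abs_mul, abs_of_nonneg p0]
    have := mul_le_mul_of_nonneg_right hkx p0
    linarith
  · rw [abs_mul, abs_of_nonneg hx]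
    have := mul_le_mul_of_nonneg_left hg hx
    have : x * (b * millsMoment 1 x) ≤ b * millsMoment 0 x := by
      calc _ = b * (x * millsMoment 1 x) := by ring
        _ ≤ _ := by gcongr
    linarith

/-- A common bound for the Stein solutions of Lipschitz test functions. -/
def steinBound : ℝ := 3 + 2 * gaussAbsMoment * millsMoment 0 0 + 2 * millsMoment 0 0 +
  gaussAbsMoment + 1

lemma steinBound_pos : 0 < steinBound := by
  have h1 := gaussAbsMoment_nonneg
  have h2 := millsMoment_nonneg 0 0
  unfold steinBound
  positivity

theorem exists_isSteinSolution_lipschitz {ψ : ℝ → ℝ} (hψ : LipschitzWith 1 ψ) :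
    ∃ f g, IsSteinSolution (fun x => ψ x - ∫ z, ψ z ∂(gaussianReal 0 1)) steinBound f g
      fun _ => 0 := by
  have ha := gaussAbsMoment_nonneg
  have hm := millsMoment_nonneg 0 0
  set k : ℝ → ℝ := fun x => ψ x - ∫ z, ψ z ∂(gaussianReal 0 1) with hk
  have hkL : LipschitzWith 1 k := by
    refine LipschitzWith.of_dist_le_mul fun x y => ?_
    simpa [hk, Real.dist_eq] using hψ.dist_le_mul x y
  have hkL' : LipschitzWith 1 (fun y => k (-y)) := by
    refine LipschitzWith.of_dist_le_mul fun x y => ?_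
    refine (hkL.dist_le_mul (-x) (-y)).trans_eq ?_
    rw [dist_neg_neg]
  have hkb : ∀ x, |k x| ≤ |x| + gaussAbsMoment := abs_sub_integral_le hψ
  have hki := integrable_mul_exp_of_lipschitz hkL
  have hk0 : ∫ y, k y * exp (-y ^ 2 / 2) = 0 := by
    have h1 := integral_gaussianReal_zero_one k
    have h2 : ∫ z, k z ∂(gaussianReal 0 1) = 0 := by
      rw [hk, integral_sub (integrable_lipschitz_gaussian hψ) (integrable_const _)]
      simp
    rw [h2, zero_eq_mul] at h1
    exact h1.resolve_left (by positivity)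
  have hsymm : ∀ x, gaussTail k x = -gaussTail (fun y => k (-y)) (-x) := fun x => by
    rw [gaussTail_neg hki, hk0]; ring
  have hbounds : ∀ x, |gaussTail k x| ≤ 1 + gaussAbsMoment * millsMoment 0 0 ∧
      |x * gaussTail k x - k x| ≤ 2 * millsMoment 0 0 + gaussAbsMoment ∧
      |x * (x * gaussTail k x - k x)| ≤ 2 + gaussAbsMoment * millsMoment 0 0 := by
    intro x
    rcases le_total 0 x with hx | hx
    · exact gaussTail_bounds hkL ha hkb hx
    · have h := gaussTail_bounds hkL' ha (fun x => by simpa using hkb (-x)) (neg_nonneg.2 hx)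
      simp only [neg_neg] at h
      rw [hsymm x, abs_neg, show x * -gaussTail (fun y => k (-y)) (-x) - k x =
        -x * gaussTail (fun y => k (-y)) (-x) - k x by ring]
      refine ⟨h.1, h.2.1, ?_⟩
      rw [← abs_neg, ← neg_mul]
      exact h.2.2
  have hd := hasDerivAt_gaussTail hkL.continuous hki
  set f := gaussTail k with hf
  have hgL : ∀ x y, |(x * f x - k x) - (y * f y - k y)| ≤ steinBound * |x - y| := by
    intro x y
    have hd2 : ∀ x, HasDerivAt (fun x => x * f x) (f x + x * (x * f x - k x)) x := fun x => by
      exact ((hasDerivAt_id x).mul (hd x)).congr_deriv (by simp)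
    have h1 := Convex.norm_image_sub_le_of_norm_hasDerivWithin_le
      (C := 3 + 2 * gaussAbsMoment * millsMoment 0 0)
      (fun x _ => (hd2 x).hasDerivWithinAt) (fun x _ => ?_) convex_univ (Set.mem_univ y)
      (Set.mem_univ x)
    · have h2 := hkL.dist_le_mul x y
      simp only [Real.dist_eq, NNReal.coe_one, one_mul] at h2
      simp only [Real.norm_eq_abs] at h1
      have h3 : |(x * f x - k x) - (y * f y - k y)| ≤ |x * f x - y * f y| + |k x - k y| := by
        rw [show (x * f x - k x) - (y * f y - k y) = (x * f x - y * f y) - (k x - k y) by ring]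
        exact abs_sub _ _
      have h4 : 0 ≤ (2 * millsMoment 0 0 + gaussAbsMoment) * |x - y| := by positivity
      unfold steinBound
      linarith
    · rw [Real.norm_eq_abs]
      refine (abs_add_le _ _).trans ?_
      have := hbounds x
      linarith
  have hinc : ∀ d : ℝ, 0 < d → ∀ x z, x ≤ z → z ≤ x + d →
      |f (x + d) - f x - d * (z * f z - k z)| ≤ steinBound * d ^ 2 := by
    intro d hd0 x z hxz hzx
    have hd3 : ∀ t, HasDerivAt (fun t => f t - (z * f z - k z) * t)
        ((t * f t - k t) - (z * f z - k z)) t := fun t => by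
      exact ((hd t).sub ((hasDerivAt_id t).const_mul (z * f z - k z))).congr_deriv (by simp)
    have h1 := Convex.norm_image_sub_le_of_norm_hasDerivWithin_le (C := steinBound * d)
      (fun t _ => (hd3 t).hasDerivWithinAt) (fun t ht => ?_) (convex_Icc x (x + d))
      (Set.left_mem_Icc.2 (by linarith)) (Set.right_mem_Icc.2 (by linarith))
    · simp only [Real.norm_eq_abs, add_sub_cancel_left, abs_of_pos hd0] at h1
      calc _ = _ := by congr 1; ring
        _ ≤ _ := h1
        _ = _ := by ring
    · rw [Real.norm_eq_abs]
      refine (hgL t z).trans (mul_le_mul_of_nonneg_left ?_ steinBound_pos.le)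
      rw [abs_le]
      constructor <;> linarith [ht.1, ht.2]
  have hneg : ∀ x y d : ℝ, |-y - -x - d| = |y - x - -d| := fun x y d => by
    rw [← abs_neg]; congr 1; ring
  refine ⟨fun x => -f x, fun x => -(x * f x - k x), ⟨fun x => by ring, fun x => ?_, fun x => ?_,
    fun x => ?_, fun d hd0 x => ?_, fun d hd0 x => ?_⟩⟩
  · rw [abs_neg]
    refine (hbounds x).1.trans ?_
    unfold steinBound
    nlinarith [mul_nonneg ha hm]
  · rw [abs_neg]
    refine (hbounds x).2.1.trans ?_
    unfold steinBound
    nlinarith [mul_nonneg ha hm]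
  · simpa using steinBound_pos.le
  · have := hinc d hd0 x x le_rfl (by linarith)
    rw [hneg, mul_neg, neg_neg]
    simpa using this
  · have := hinc d hd0 x (x + d) (by linarith) le_rfl
    rw [hneg, mul_neg, neg_neg]
    simpa using this

end SteinSolution

section SteinIndicator

/-- The solution of Stein's equation for the indicator of `(-∞, z]`. -/
def steinInd (z x : ℝ) : ℝ :=
  if x ≤ z then (1 - ((gaussianReal 0 1) (Set.Iic z)).toReal) * millsMoment 0 (-x)
  else ((gaussianReal 0 1) (Set.Iic z)).toReal * millsMoment 0 x

lemma one_sub_cdf_mul_millsMoment (z : ℝ) :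
    (1 - ((gaussianReal 0 1) (Set.Iic z)).toReal) * millsMoment 0 (-z) =
      ((gaussianReal 0 1) (Set.Iic z)).toReal * millsMoment 0 z := by
  have hi : Integrable fun y : ℝ => (1 : ℝ) * exp (-y ^ 2 / 2) := by
    simpa using integrable_exp_neg_sq_half
  have hT := integral_gaussianReal_zero_one fun _ => 1
  simp only [integral_const, probReal_univ, smul_eq_mul, mul_one] at hT
  have hneg := gaussTail_neg hi z
  have htail := gaussTail_eq (fun _ => 1) z
  have hsum := intervalIntegral.integral_Iic_add_Ioi (b := z) hi.integrableOn hi.integrableOn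
  have hcdf := gaussianReal_zero_one_toReal (Set.Iic z)
  simp only [gaussTail_one] at hneg htail
  simp only [one_mul] at hT hneg htail hsum
  have hE : 0 < exp (z ^ 2 / 2) := exp_pos _
  rw [← hsum] at hT hneg
  rw [hneg, htail, hcdf]
  generalize (√(2 * π))⁻¹ = r at *
  linear_combination (exp (z ^ 2 / 2) * ∫ y in Set.Iic z, exp (-y ^ 2 / 2)) * hT

lemma cdf_nonneg (z : ℝ) : 0 ≤ ((gaussianReal 0 1) (Set.Iic z)).toReal := ENNReal.toReal_nonneg

lemma cdf_le_one (z : ℝ) : ((gaussianReal 0 1) (Set.Iic z)).toReal ≤ 1 :=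
  measureReal_le_one

lemma steinInd_of_le {z x : ℝ} (h : x ≤ z) : steinInd z x =
    (1 - ((gaussianReal 0 1) (Set.Iic z)).toReal) * millsMoment 0 (-x) := if_pos h

lemma steinInd_of_ge {z x : ℝ} (h : z ≤ x) : steinInd z x =
    ((gaussianReal 0 1) (Set.Iic z)).toReal * millsMoment 0 x := by
  rcases h.lt_or_eq with h | rfl
  · exact if_neg h.not_ge
  · rw [steinInd_of_le le_rfl, one_sub_cdf_mul_millsMoment]

lemma mul_steinInd_mono (z : ℝ) : Monotone fun x => x * steinInd z x := by
  have h0 := cdf_nonneg z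
  have h1 : 0 ≤ 1 - ((gaussianReal 0 1) (Set.Iic z)).toReal := sub_nonneg.2 (cdf_le_one z)
  have hL : ∀ x y, x ≤ y → y ≤ z → x * steinInd z x ≤ y * steinInd z y := fun x y hxy hy => by
    rw [steinInd_of_le (hxy.trans hy), steinInd_of_le hy]
    have := mul_le_mul_of_nonneg_left (mul_millsMoment_zero_mono (neg_le_neg hxy)) h1
    simp only at this
    linarith
  have hR : ∀ x y, x ≤ y → z ≤ x → x * steinInd z x ≤ y * steinInd z y := fun x y hxy hx => by
    rw [steinInd_of_ge (hx.trans hxy), steinInd_of_ge hx]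
    have := mul_le_mul_of_nonneg_left (mul_millsMoment_zero_mono hxy) h0
    simp only at this
    linarith
  intro x y hxy
  rcases le_total y z with hy | hy
  · exact hL x y hxy hy
  · rcases le_total z x with hx | hx
    · exact hR x y hxy hx
    · exact (hL x z hx le_rfl).trans (hR z y hy le_rfl)

lemma abs_mul_steinInd_le_one (z x : ℝ) : |x * steinInd z x| ≤ 1 := by
  have h0 := cdf_nonneg z
  have h1 : 0 ≤ 1 - ((gaussianReal 0 1) (Set.Iic z)).toReal := sub_nonneg.2 (cdf_le_one z)
  have hL : ∀ x, x ≤ z → -1 ≤ x * steinInd z x := fun x hx => by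
    rw [steinInd_of_le hx]
    have := mul_le_mul_of_nonneg_left (mul_millsMoment_zero_le_one (-x)) h1
    linarith
  have hR : ∀ x, z ≤ x → x * steinInd z x ≤ 1 := fun x hx => by
    rw [steinInd_of_ge hx]
    have := mul_le_mul_of_nonneg_left (mul_millsMoment_zero_le_one x) h0
    linarith
  rw [abs_le]
  rcases le_total x z with hx | hx
  · exact ⟨hL x hx, (mul_steinInd_mono z hx).trans (hR z le_rfl)⟩
  · exact ⟨(hL z le_rfl).trans (mul_steinInd_mono z hx), hR x hx⟩

lemma abs_steinInd_le (z x : ℝ) : |steinInd z x| ≤ millsMoment 0 0 := by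
  have h0 := cdf_nonneg z
  have h1 : 0 ≤ 1 - ((gaussianReal 0 1) (Set.Iic z)).toReal := sub_nonneg.2 (cdf_le_one z)
  have hmax : steinInd z z ≤ millsMoment 0 0 := by
    rcases le_total 0 z with hz | hz
    · rw [steinInd_of_ge le_rfl]
      exact (mul_le_of_le_one_left (millsMoment_nonneg _ _) (cdf_le_one z)).trans
        (millsMoment_antitone 0 hz)
    · rw [steinInd_of_le le_rfl]
      exact (mul_le_of_le_one_left (millsMoment_nonneg _ _) (by linarith)).trans
        (millsMoment_antitone 0 (by linarith))
  rcases le_total x z with hx | hx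
  · have e := steinInd_of_le (le_refl z)
    rw [steinInd_of_le hx, abs_of_nonneg (mul_nonneg h1 (millsMoment_nonneg _ _))]
    refine le_trans ?_ hmax
    rw [e]
    exact mul_le_mul_of_nonneg_left (millsMoment_antitone 0 (by linarith)) h1
  · have e := steinInd_of_ge (le_refl z)
    rw [steinInd_of_ge hx, abs_of_nonneg (mul_nonneg h0 (millsMoment_nonneg _ _))]
    refine le_trans ?_ hmax
    rw [e]
    exact mul_le_mul_of_nonneg_left (millsMoment_antitone 0 hx) h0

lemma continuous_steinInd (z : ℝ) : Continuous (steinInd z) := by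
  have hA : Continuous (millsMoment 0) :=
    continuous_iff_continuousAt.2 fun x => (hasDerivAt_millsMoment_zero x).continuousAt
  refine Continuous.if_le (by fun_prop) (by fun_prop) continuous_id continuous_const ?_
  rintro x rfl
  exact one_sub_cdf_mul_millsMoment _

lemma hasDerivWithinAt_steinInd (z x : ℝ) :
    HasDerivWithinAt (steinInd z) (x * steinInd z x + (if x < z then 1 else 0) -
      ((gaussianReal 0 1) (Set.Iic z)).toReal) (Set.Ici x) x := by
  set c := ((gaussianReal 0 1) (Set.Iic z)).toReal with hc
  split_ifs with h
  · refine HasDerivAt.hasDerivWithinAt ?_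
    have h1 := ((hasDerivAt_millsMoment_zero (-x)).comp x (hasDerivAt_neg x)).const_mul (1 - c)
    refine (h1.congr_deriv ?_).congr_of_eventuallyEq ?_
    · rw [steinInd_of_le h.le]; ring
    · filter_upwards [Iio_mem_nhds h] with y hy
      exact steinInd_of_le (le_of_lt hy)
  · rw [not_lt] at h
    have h1 := ((hasDerivAt_millsMoment_zero x).const_mul c).hasDerivWithinAt (s := Set.Ici x)
    refine (h1.congr_deriv ?_).congr (fun y hy => steinInd_of_ge (h.trans hy))
      (steinInd_of_ge h)
    rw [steinInd_of_ge h]; ring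

theorem isSteinSolution_indicator (z : ℝ) :
    IsSteinSolution
      (fun x => (if x ≤ z then 1 else 0) - ((gaussianReal 0 1) (Set.Iic z)).toReal)
      (millsMoment 0 0 + 2) (steinInd z)
      (fun x => x * steinInd z x + (if x ≤ z then 1 else 0) -
        ((gaussianReal 0 1) (Set.Iic z)).toReal)
      (fun x => x * steinInd z x - if x ≤ z then 1 else 0) := by
  have hm := millsMoment_nonneg 0 0
  have hinc : ∀ d : ℝ, 0 < d → ∀ x w, x ≤ w → w ≤ x + d →
      |steinInd z (x + d) - steinInd z x - d * (w * steinInd z w + (if w ≤ z then 1 else 0) -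
        ((gaussianReal 0 1) (Set.Iic z)).toReal)| ≤
      d * (((x + d) * steinInd z (x + d) - if x + d ≤ z then 1 else 0) -
        (x * steinInd z x - if x ≤ z then 1 else 0)) + (millsMoment 0 0 + 2) * d ^ 2 := by
    intro d hd x w hxw hwx
    set γ := w * steinInd z w + (if w ≤ z then 1 else 0) -
      ((gaussianReal 0 1) (Set.Iic z)).toReal with hγ
    have hlin : ∀ t, HasDerivAt (fun t => γ * t) γ t := fun t => by
      simpa using (hasDerivAt_id t).const_mul γ
    have h1 := norm_image_sub_le_of_norm_deriv_right_le_segment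
      (f := fun t => steinInd z t - γ * t) (a := x) (b := x + d)
      (C := ((x + d) * steinInd z (x + d) - if x + d ≤ z then 1 else 0) -
        (x * steinInd z x - if x ≤ z then 1 else 0))
      (((continuous_steinInd z).sub (by fun_prop)).continuousOn)
      (fun t _ => (hasDerivWithinAt_steinInd z t).sub (hlin t).hasDerivWithinAt)
      (fun t ht => ?_) (x + d) (Set.right_mem_Icc.2 (by linarith))
    · rw [Real.norm_eq_abs, add_sub_cancel_left] at h1
      calc _ = _ := by congr 1; ring
        _ ≤ _ := h1
        _ ≤ _ := by
          have : 0 ≤ (millsMoment 0 0 + 2) * d ^ 2 := by positivity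
          linarith
    · have m1 := mul_steinInd_mono z ht.1
      have m2 := mul_steinInd_mono z ht.2.le
      have m3 := mul_steinInd_mono z hxw
      have m4 := mul_steinInd_mono z hwx
      have ht1 := ht.1
      have ht2 := ht.2
      simp only at m1 m2 m3 m4
      rw [Real.norm_eq_abs, hγ, abs_le]
      constructor <;> split_ifs <;> linarith
  refine ⟨fun x => by ring, fun x => ?_, fun x => ?_, fun x => ?_,
    fun d hd x => hinc d hd x x le_rfl (by linarith),
    fun d hd x => hinc d hd x (x + d) (by linarith) le_rfl⟩
  · linarith [abs_steinInd_le z x]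
  all_goals
    have h1 := abs_le.1 (abs_mul_steinInd_le_one z x)
    have h2 := cdf_nonneg z
    have h3 := cdf_le_one z
    rw [abs_le]
    constructor <;> split_ifs <;> linarith [h1.1, h1.2]

end SteinIndicator

section Embeddings

variable {V : Type} [Fintype V] [DecidableEq V] {n : ℕ}

lemma card_embedding_pinned_le (S : Finset V) (g : V → Fin n) :
    #{φ : V ↪ Fin n | ∀ x ∈ S, φ x = g x} ≤ n ^ (Fintype.card V - #S) := by
  classical
  calc #{φ : V ↪ Fin n | ∀ x ∈ S, φ x = g x}
      ≤ #(Fintype.piFinset fun x => if x ∈ S then {g x} else (univ : Finset (Fin n))) := by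
        refine card_le_card_of_injOn (fun φ => ⇑φ) (fun φ hφ => ?_)
          (DFunLike.coe_injective.injOn)
        rw [mem_coe, mem_filter] at hφ
        rw [mem_coe, Fintype.mem_piFinset]
        intro x
        split_ifs with hx
        · simp [hφ.2 x hx]
        · simp
    _ = n ^ (Fintype.card V - #S) := by
        rw [Fintype.card_piFinset]
        have (x : V) : #(if x ∈ S then {g x} else (univ : Finset (Fin n))) =
            if x ∈ S then 1 else n := by split_ifs <;> simp
        simp_rw [this, prod_ite, prod_const, one_pow, one_mul]
        rw [← card_compl]
        congr 2
        ext; simp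

omit [DecidableEq V] in
lemma card_embedding_pair_eq {u w : V} {a b a' b' : Fin n} (hab : a ≠ b)
    (hab' : a' ≠ b') :
    #{φ : V ↪ Fin n | φ u = a ∧ φ w = b} = #{φ : V ↪ Fin n | φ u = a' ∧ φ w = b'} := by
  classical
  let σ : Equiv.Perm (Fin n) := Equiv.swap a a' |>.trans (Equiv.swap (Equiv.swap a a' b) b')
  have hb1 : Equiv.swap a a' b ≠ a' := by
    intro h
    apply hab
    exact ((Equiv.swap a a').injective (h.trans (Equiv.swap_apply_left a a').symm)).symm
  have ha : σ a = a' := by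
    simp only [σ, Equiv.trans_apply, Equiv.swap_apply_left]
    exact Equiv.swap_apply_of_ne_of_ne hb1.symm hab'
  have hb : σ b = b' := by simp [σ]
  refine card_bij' (fun φ _ => φ.trans σ.toEmbedding) (fun φ _ => φ.trans σ.symm.toEmbedding)
    ?_ ?_ ?_ ?_
  · simp only [mem_filter, mem_univ, true_and, Function.Embedding.trans_apply,
      Equiv.coe_toEmbedding]
    rintro φ ⟨rfl, rfl⟩
    exact ⟨ha, hb⟩
  · simp only [mem_filter, mem_univ, true_and, Function.Embedding.trans_apply,
      Equiv.coe_toEmbedding]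
    rintro φ ⟨rfl, rfl⟩
    exact ⟨σ.symm_apply_eq.2 ha.symm, σ.symm_apply_eq.2 hb.symm⟩
  · intro φ _; ext; simp
  · intro φ _; ext; simp

lemma card_embedding_pair {u w : V} (huw : u ≠ w) {a b : Fin n} (hab : a ≠ b) :
    #{φ : V ↪ Fin n | φ u = a ∧ φ w = b} =
      (n - 2).descFactorial (Fintype.card V - 2) := by
  classical
  have hV : 2 ≤ Fintype.card V := by
    rw [← card_pair huw]; exact card_le_univ _
  have hn : 2 ≤ n := by
    have := card_le_univ ({a, b} : Finset (Fin n))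
    rwa [card_pair hab, Fintype.card_fin] at this
  have hsum : #(univ : Finset (V ↪ Fin n)) =
      ∑ q ∈ (univ : Finset (Fin n)).offDiag, #{φ : V ↪ Fin n | (φ u, φ w) = q} :=
    card_eq_sum_card_fiberwise fun φ _ => by simp [huw]
  rw [card_univ, Fintype.card_embedding_eq, Fintype.card_fin,
    sum_congr rfl (g := fun _ => #{φ : V ↪ Fin n | φ u = a ∧ φ w = b})
      (fun q hq => by
        rw [card_embedding_pair_eq hab (by simpa using hq : q.1 ≠ q.2)]
        simp [Prod.ext_iff]), sum_const, offDiag_card, card_univ, Fintype.card_fin, smul_eq_mul] at hsum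
  obtain ⟨N, rfl⟩ := Nat.exists_eq_add_of_le' hn
  obtain ⟨W, hW⟩ := Nat.exists_eq_add_of_le' hV
  rw [hW, Nat.succ_descFactorial_succ, Nat.succ_descFactorial_succ, ← mul_assoc] at hsum
  have : (N + 2) * (N + 2) - (N + 2) = (N + 1 + 1) * (N + 1) := by
    rw [← Nat.mul_sub_one]; rfl
  rw [this] at hsum
  rw [hW, Nat.add_sub_cancel, Nat.add_sub_cancel]
  exact (Nat.eq_of_mul_eq_mul_left (by positivity) hsum).symm

end Embeddings

lemma abs_descFactorial_mul_zpow_sub_one_le {n w : ℕ} (hn : 2 ≤ n) (hw : 2 ≤ w) :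
    |((n - 2).descFactorial (w - 2) : ℝ) * (n : ℝ) ^ ((2 : ℤ) - (w : ℤ)) - 1| ≤
      (w : ℝ) ^ 2 * (n : ℝ)⁻¹ := by
  have hn0 : (0 : ℝ) < n := by positivity
  obtain ⟨r, rfl⟩ := Nat.exists_eq_add_of_le' hw
  have hz : (n : ℝ) ^ ((2 : ℤ) - ((r + 2 : ℕ) : ℤ)) = ((n : ℝ) ^ r)⁻¹ := by
    rw [show (2 : ℤ) - ((r + 2 : ℕ) : ℤ) = -(r : ℤ) by push_cast; ring, zpow_neg, zpow_natCast]
  rw [hz, Nat.add_sub_cancel, ← div_eq_mul_inv]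
  have hup : ((n - 2).descFactorial r : ℝ) / (n : ℝ) ^ r ≤ 1 := by
    rw [div_le_one (by positivity)]
    exact_mod_cast (Nat.descFactorial_le_pow _ _).trans (Nat.pow_le_pow_left (Nat.sub_le _ _) _)
  have hlow : 1 - ((r + 2 : ℕ) : ℝ) ^ 2 * (n : ℝ)⁻¹ ≤
      ((n - 2).descFactorial r : ℝ) / (n : ℝ) ^ r := by
    by_cases hrn : r + 1 ≤ n
    · have h1 : ((n : ℝ) - (r + 1)) ^ r ≤ ((n - 2).descFactorial r : ℝ) := by
        have := Nat.pow_sub_le_descFactorial (n - 2) r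
        rw [show n - 2 + 1 - r = n - (r + 1) by omega] at this
        have h2 : (((n - (r + 1) : ℕ) : ℝ)) ^ r ≤ ((n - 2).descFactorial r : ℝ) := by
          exact_mod_cast this
        rwa [Nat.cast_sub hrn, Nat.cast_add, Nat.cast_one] at h2
      have h3 : -1 ≤ -(((r : ℝ) + 1) * (n : ℝ)⁻¹) := by
        rw [neg_le_neg_iff, ← div_eq_mul_inv, div_le_one hn0]
        exact_mod_cast hrn
      have h4 := one_add_mul_le_pow (by linarith : -2 ≤ -(((r : ℝ) + 1) * (n : ℝ)⁻¹)) r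
      calc 1 - ((r + 2 : ℕ) : ℝ) ^ 2 * (n : ℝ)⁻¹
          ≤ 1 + r * -(((r : ℝ) + 1) * (n : ℝ)⁻¹) := by
            have : (0 : ℝ) < (n : ℝ)⁻¹ := by positivity
            push_cast
            nlinarith [mul_nonneg (Nat.cast_nonneg (α := ℝ) r) this.le]
        _ ≤ (1 + -(((r : ℝ) + 1) * (n : ℝ)⁻¹)) ^ r := h4
        _ = ((n : ℝ) - (r + 1)) ^ r / (n : ℝ) ^ r := by
            rw [← div_pow]; congr 1; field_simp; ring
        _ ≤ _ := by gcongr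
    · refine le_trans ?_ (by positivity : (0 : ℝ) ≤ ((n - 2).descFactorial r : ℝ) / (n : ℝ) ^ r)
      push Not at hrn
      rw [sub_nonpos, ← div_eq_mul_inv, one_le_div hn0]
      have : (n : ℝ) ≤ r + 1 := by exact_mod_cast hrn.le
      push_cast
      nlinarith [Nat.cast_nonneg (α := ℝ) r]
  rw [abs_le]
  constructor
  · linarith
  · have : (0 : ℝ) ≤ ((r + 2 : ℕ) : ℝ) ^ 2 * (n : ℝ)⁻¹ := by positivity
    linarith

section EdgeImage

variable {V : Type} [Fintype V] [DecidableEq V] {n : ℕ} (H : SimpleGraph V)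

open Classical in
/-- The image in `EdgeIdx n` of the edge set of `H` under an embedding of its vertices. -/
def edgeImage (φ : V ↪ Fin n) : Finset (EdgeIdx n) :=
  {t | ∃ a b, H.Adj a b ∧ φ a = t.1.1 ∧ φ b = t.1.2}

omit [DecidableEq V] in
lemma mem_edgeImage {φ : V ↪ Fin n} {t : EdgeIdx n} :
    t ∈ edgeImage H φ ↔ ∃ a b, H.Adj a b ∧ φ a = t.1.1 ∧ φ b = t.1.2 := by
  simp [edgeImage]

omit [DecidableEq V] in
lemma card_edgeImage (φ : V ↪ Fin n) : #(edgeImage H φ) = eCount H := by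
  classical
  have hinj : Function.Injective fun t : EdgeIdx n => s(t.1.1, t.1.2) := by
    rintro ⟨⟨a, b⟩, hab⟩ ⟨⟨a', b'⟩, hab'⟩ h
    rcases Sym2.eq_iff.1 h with ⟨rfl, rfl⟩ | ⟨rfl, rfl⟩
    · rfl
    · exact absurd hab (lt_asymm hab')
  rw [eCount, Nat.card_eq_fintype_card, ← Set.toFinset_card, ← card_image_of_injective _ hinj,
    ← card_image_of_injective _ (Sym2.map.injective φ.injective)]
  congr 1
  ext e
  induction e with | _ x y
  simp only [mem_image, Set.mem_toFinset]
  constructor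
  · rintro ⟨t, ht, he⟩
    obtain ⟨a, b, hab, ha, hb⟩ := (mem_edgeImage H).1 ht
    exact ⟨s(a, b), hab, by rw [← he, Sym2.map_mk, ha, hb]⟩
  · rintro ⟨e, he, hxy⟩
    induction e with | _ a b
    have hab : H.Adj a b := he
    rw [← hxy, Sym2.map_mk]
    rcases lt_or_gt_of_ne (φ.injective.ne hab.ne) with h | h
    · exact ⟨⟨(φ a, φ b), h⟩, (mem_edgeImage H).2 ⟨a, b, hab, rfl, rfl⟩, rfl⟩
    · exact ⟨⟨(φ b, φ a), h⟩, (mem_edgeImage H).2 ⟨b, a, hab.symm, rfl, rfl⟩, Sym2.eq_swap⟩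

omit [DecidableEq V] in
lemma forall_mem_edgeImage_iff (φ : V ↪ Fin n) (y : EdgeIdx n → Bool) :
    (∀ t ∈ edgeImage H φ, y t = true) ↔ ∀ a b, H.Adj a b → yAdj y (φ a) (φ b) = true := by
  constructor
  · intro h a b hab
    unfold yAdj
    split_ifs with h1 h2
    · exact h _ ((mem_edgeImage H).2 ⟨a, b, hab, rfl, rfl⟩)
    · exact h _ ((mem_edgeImage H).2 ⟨b, a, hab.symm, rfl, rfl⟩)
    · exact absurd (φ.injective (le_antisymm (not_lt.1 h2) (not_lt.1 h1))) hab.ne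
  · rintro h ⟨⟨x, z⟩, hxz⟩ ht
    obtain ⟨a, b, hab, rfl, rfl⟩ := (mem_edgeImage H).1 ht
    have := h a b hab
    rwa [yAdj, dif_pos hxz] at this

omit [DecidableEq V] in
lemma homCount_eq_sum_mono (y : EdgeIdx n → Bool) :
    (homCount H y : ℝ) = ∑ φ : V ↪ Fin n, mono (edgeImage H φ) y := by
  classical
  have hm (φ : V ↪ Fin n) : mono (edgeImage H φ) y =
      if ∀ a b, H.Adj a b → yAdj y (φ a) (φ b) = true then 1 else 0 := by
    rw [mono, prod_boole]
    simp only [forall_mem_edgeImage_iff]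
  simp_rw [hm, sum_boole]
  rw [homCount, ← Fintype.card_subtype, ← Nat.card_eq_fintype_card]
  congr 1
  exact Nat.card_congr
    { toFun := fun φ => ⟨⟨φ.1, φ.2.1⟩, φ.2.2⟩
      invFun := fun φ => ⟨φ.1, φ.1.injective, φ.2⟩
      left_inv := fun _ => rfl
      right_inv := fun _ => rfl }

omit [DecidableEq V] in
open Classical in
lemma card_adj_pairs : #{q : V × V | H.Adj q.1 q.2} = 2 * eCount H := by
  rw [eCount, Nat.card_eq_fintype_card, ← Set.toFinset_card]
  have := H.sum_degrees_eq_twice_card_edges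
  rw [SimpleGraph.edgeFinset] at this
  rw [← this, ← univ_product_univ, card_filter, sum_product]
  refine sum_congr rfl fun a _ => ?_
  rw [← card_filter, ← SimpleGraph.card_neighborFinset_eq_degree]
  congr 1
  ext; simp

lemma card_mem_edgeImage (s : EdgeIdx n) :
    #{φ : V ↪ Fin n | s ∈ edgeImage H φ} =
      2 * eCount H * (n - 2).descFactorial (Fintype.card V - 2) := by
  classical
  have h (φ : V ↪ Fin n) : (if s ∈ edgeImage H φ then 1 else 0) =
      ∑ q : V × V with H.Adj q.1 q.2, if φ q.1 = s.1.1 ∧ φ q.2 = s.1.2 then 1 else 0 := by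
    split_ifs with hs
    · obtain ⟨a, b, hab, ha, hb⟩ := (mem_edgeImage H).1 hs
      rw [sum_eq_single_of_mem (a, b) (by simpa using hab), if_pos ⟨ha, hb⟩]
      rintro ⟨a', b'⟩ - hne
      rw [if_neg]
      rintro ⟨ha', hb'⟩
      exact hne (Prod.ext (φ.injective (ha'.trans ha.symm)) (φ.injective (hb'.trans hb.symm)))
    · symm
      refine sum_eq_zero fun q hq => if_neg fun hq' => hs ?_
      exact (mem_edgeImage H).2 ⟨q.1, q.2, by simpa using hq, hq'⟩
  rw [card_filter, sum_congr rfl fun φ _ => h φ, sum_comm, ← card_adj_pairs, ← smul_eq_mul,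
    ← sum_const]
  refine sum_congr rfl fun q hq => ?_
  rw [← card_filter]
  exact card_embedding_pair (H.ne_of_adj (by simpa using hq)) s.2.ne

lemma card_mem_edgeImage_mem_edgeImage_mul_le {s t : EdgeIdx n} (hst : t ≠ s) :
    #{φ : V ↪ Fin n | s ∈ edgeImage H φ ∧ t ∈ edgeImage H φ} * n ^ 3 ≤
      Fintype.card V ^ 3 * n ^ Fintype.card V := by
  classical
  obtain ⟨z, hz1, hz2, hz⟩ : ∃ z, z ≠ s.1.1 ∧ z ≠ s.1.2 ∧ (z = t.1.1 ∨ z = t.1.2) := by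
    obtain ⟨⟨s1, s2⟩, hs⟩ := s
    obtain ⟨⟨t1, t2⟩, ht⟩ := t
    by_contra! hcon
    have h1 := hcon t1
    have h2 := hcon t2
    dsimp only at h1 h2 hs ht
    apply hst
    have : t1 = s1 ∧ t2 = s2 := by grind
    obtain ⟨rfl, rfl⟩ := this
    rfl
  have hsub : ({φ : V ↪ Fin n | s ∈ edgeImage H φ ∧ t ∈ edgeImage H φ} : Finset _) ⊆
      (univ : Finset (V × V × V)).biUnion fun q =>
        {φ : V ↪ Fin n | φ q.1 = s.1.1 ∧ φ q.2.1 = s.1.2 ∧ φ q.2.2 = z} := by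
    intro φ hφ
    obtain ⟨hs, ht⟩ := (mem_filter.1 hφ).2
    obtain ⟨a, b, -, ha, hb⟩ := (mem_edgeImage H).1 hs
    obtain ⟨c, d, -, hc, hd⟩ := (mem_edgeImage H).1 ht
    rw [mem_biUnion]
    rcases hz with rfl | rfl
    · exact ⟨(a, b, c), mem_univ _, by simp [ha, hb, hc]⟩
    · exact ⟨(a, b, d), mem_univ _, by simp [ha, hb, hd]⟩
  have hq (q : V × V × V) :
      #{φ : V ↪ Fin n | φ q.1 = s.1.1 ∧ φ q.2.1 = s.1.2 ∧ φ q.2.2 = z} * n ^ 3 ≤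
        n ^ Fintype.card V := by
    obtain ⟨a, b, c⟩ := q
    rcases ({φ : V ↪ Fin n | φ a = s.1.1 ∧ φ b = s.1.2 ∧ φ c = z} :
      Finset _).eq_empty_or_nonempty with h0 | ⟨φ₀, h0⟩
    · simp [h0]
    obtain ⟨ha, hb, hc⟩ := (mem_filter.1 h0).2
    have hab : a ≠ b := fun h => s.2.ne (by rw [← ha, ← hb, h])
    have hac : a ≠ c := fun h => hz1 (by rw [← ha, ← hc, h])
    have hbc : b ≠ c := fun h => hz2 (by rw [← hb, ← hc, h])
    have h3 : #{a, b, c} = 3 := card_eq_three.2 ⟨a, b, c, hab, hac, hbc, rfl⟩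
    have hV : 3 ≤ Fintype.card V := h3 ▸ card_le_univ _
    have := card_embedding_pinned_le {a, b, c} φ₀
    rw [h3] at this
    simp only [mem_insert, mem_singleton, forall_eq_or_imp, forall_eq, ha, hb, hc] at this
    calc _ ≤ n ^ (Fintype.card V - 3) * n ^ 3 := Nat.mul_le_mul_right _ this
      _ = _ := by rw [← pow_add, Nat.sub_add_cancel hV]
  calc _ ≤ (∑ q : V × V × V,
        #{φ : V ↪ Fin n | φ q.1 = s.1.1 ∧ φ q.2.1 = s.1.2 ∧ φ q.2.2 = z}) * n ^ 3 :=
        Nat.mul_le_mul_right _ ((card_le_card hsub).trans card_biUnion_le)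
    _ ≤ ∑ _q : V × V × V, n ^ Fintype.card V := by
        rw [sum_mul]; exact sum_le_sum fun q _ => hq q
    _ = _ := by
        rw [sum_const, card_univ, Fintype.card_prod, Fintype.card_prod, smul_eq_mul]
        ring

end EdgeImage

section ErgmHamiltonian

variable {k : ℕ} (β : Fin (k + 1) → ℝ) (v : Fin (k + 1) → ℕ)
  (H : ∀ j : Fin (k + 1), SimpleGraph (Fin (v j))) (n : ℕ)

/-- The monomials of the ERGM Hamiltonian, indexed by the embeddings of all the graphs. -/
def ergmEdges (α : Σ j : Fin (k + 1), Fin (v j) ↪ Fin n) : Finset (EdgeIdx n) :=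
  edgeImage (H α.1) α.2

/-- The coefficients of the monomials of the ERGM Hamiltonian. -/
def ergmCoeff (α : Σ j : Fin (k + 1), Fin (v j) ↪ Fin n) : ℝ :=
  β α.1 * (n : ℝ) ^ ((2 : ℤ) - (v α.1 : ℤ))

lemma ergmProb_eq_gibbs : ergmProb β v H n = gibbs (ham (ergmEdges v H n) (ergmCoeff β v n)) := by
  have hw (y : EdgeIdx n → Bool) :
      ergmWeight β v H n y = exp (ham (ergmEdges v H n) (ergmCoeff β v n) y) := by
    rw [ergmWeight, ham, Fintype.sum_sigma]
    simp_rw [homCount_eq_sum_mono, mul_sum]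
    rfl
  funext y
  simp only [ergmProb, ergmZ, gibbs, hw]

lemma edgeSum_eq_sum_mono (y : EdgeIdx n → Bool) : edgeSum y = ∑ s, mono {s} y := by
  simp [edgeSum, mono]

variable {v n}

lemma sum_mem_ergmEdges (g : Fin (k + 1) → ℝ) (s : EdgeIdx n) :
    ∑ α with s ∈ ergmEdges v H n α, g α.1 =
      ∑ j, g j * (2 * eCount (H j) * ((n - 2).descFactorial (v j - 2) : ℝ)) := by
  rw [sum_filter, Fintype.sum_sigma]
  refine sum_congr rfl fun j _ => ?_
  have h : #{φ : Fin (v j) ↪ Fin n | s ∈ ergmEdges v H n ⟨j, φ⟩} = _ :=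
    card_mem_edgeImage (H j) s
  rw [← sum_filter, sum_const (g j), nsmul_eq_mul, mul_comm, h, Fintype.card_fin]
  push_cast
  ring

lemma card_ergmEdges (α : Σ j : Fin (k + 1), Fin (v j) ↪ Fin n) :
    #(ergmEdges v H n α) = eCount (H α.1) := card_edgeImage _ _

variable {H} in
/-- The densities of the monomials through a given edge are close to their limits. -/
lemma abs_sum_mem_ergmEdges_sub_le (hv : ∀ j, 2 ≤ v j) (hn : 2 ≤ n) (g : Fin (k + 1) → ℝ)
    (s : EdgeIdx n) :
    |∑ α with s ∈ ergmEdges v H n α, ergmCoeff β v n α * g α.1 -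
        2 * ∑ j, β j * eCount (H j) * g j| ≤
      (∑ j, 2 * |β j| * eCount (H j) * |g j| * (v j : ℝ) ^ 2) * (n : ℝ)⁻¹ := by
  have h := sum_mem_ergmEdges H (fun j => β j * (n : ℝ) ^ ((2 : ℤ) - (v j : ℤ)) * g j) s
  simp only [ergmCoeff]
  rw [h, mul_sum, ← sum_sub_distrib, sum_mul]
  refine (abs_sum_le_sum_abs _ _).trans (sum_le_sum fun j _ => ?_)
  have hz := abs_descFactorial_mul_zpow_sub_one_le hn (hv j)
  calc _ = 2 * |β j| * eCount (H j) * |g j| *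
        |((n - 2).descFactorial (v j - 2) : ℝ) * (n : ℝ) ^ ((2 : ℤ) - (v j : ℤ)) - 1| := by
        rw [show β j * (n : ℝ) ^ ((2 : ℤ) - (v j : ℤ)) * g j * (2 * eCount (H j) *
            ((n - 2).descFactorial (v j - 2) : ℝ)) - 2 * (β j * eCount (H j) * g j) =
            2 * β j * eCount (H j) * g j * (((n - 2).descFactorial (v j - 2) : ℝ) *
              (n : ℝ) ^ ((2 : ℤ) - (v j : ℤ)) - 1) by ring, abs_mul, abs_mul, abs_mul, abs_mul,
          abs_two, Nat.abs_cast]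
    _ ≤ 2 * |β j| * eCount (H j) * |g j| * ((v j : ℝ) ^ 2 * (n : ℝ)⁻¹) := by gcongr
    _ = _ := by ring

lemma jointWeight_ergm_le (hn : 2 ≤ n) {s t : EdgeIdx n} (hst : t ≠ s) :
    jointWeight (ergmEdges v H n) (ergmCoeff β v n) s t ≤
      (∑ j, |β j| * (v j : ℝ) ^ 3) * (n : ℝ)⁻¹ := by
  have hn0 : (0 : ℝ) < n := by positivity
  rw [jointWeight, sum_filter, Fintype.sum_sigma, sum_mul]
  refine sum_le_sum fun j _ => ?_
  rw [← sum_filter]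
  simp only [ergmCoeff]
  rw [sum_const, nsmul_eq_mul, abs_mul, abs_of_pos (zpow_pos hn0 _)]
  have := card_mem_edgeImage_mem_edgeImage_mul_le (H j) hst
  rw [Fintype.card_fin] at this
  change #{φ : Fin (v j) ↪ Fin n | s ∈ ergmEdges v H n ⟨j, φ⟩ ∧
    t ∈ ergmEdges v H n ⟨j, φ⟩} * _ ≤ _ at this
  have h2 : (#{φ : Fin (v j) ↪ Fin n | s ∈ ergmEdges v H n ⟨j, φ⟩ ∧ t ∈ ergmEdges v H n ⟨j, φ⟩} : ℝ) *
      n ^ 3 ≤ (v j : ℝ) ^ 3 * n ^ v j := by exact_mod_cast this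
  have hz : (n : ℝ) ^ ((2 : ℤ) - (v j : ℤ)) = n ^ 3 * ((n : ℝ)⁻¹ / n ^ v j) := by
    rw [zpow_sub₀ hn0.ne', zpow_natCast]
    field_simp
  rw [hz]
  calc _ = |β j| * ((n : ℝ)⁻¹ / n ^ v j) *
        ((#{φ : Fin (v j) ↪ Fin n | s ∈ ergmEdges v H n ⟨j, φ⟩ ∧ t ∈ ergmEdges v H n ⟨j, φ⟩} : ℝ) *
          n ^ 3) := by ring
    _ ≤ |β j| * ((n : ℝ)⁻¹ / n ^ v j) * ((v j : ℝ) ^ 3 * n ^ v j) := by gcongr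
    _ = _ := by field_simp

lemma descFactorial_mul_zpow_le_one (hn : 2 ≤ n) {w : ℕ} (hw : 2 ≤ w) :
    ((n - 2).descFactorial (w - 2) : ℝ) * (n : ℝ) ^ ((2 : ℤ) - (w : ℤ)) ≤ 1 := by
  have hn0 : (0 : ℝ) < n := by positivity
  rw [show (2 : ℤ) - (w : ℤ) = -((w - 2 : ℕ) : ℤ) by omega, zpow_neg, zpow_natCast,
    ← div_eq_mul_inv, div_le_one (by positivity)]
  exact_mod_cast (Nat.descFactorial_le_pow _ _).trans (Nat.pow_le_pow_left (Nat.sub_le _ _) _)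

lemma hasDerivAt_PhiFn (a : ℝ) :
    HasDerivAt (PhiFn β v H)
      (∑ j, β j * eCount (H j) * (((eCount (H j) : ℝ) - 1) * a ^ (eCount (H j) - 2))) a := by
  unfold PhiFn
  refine HasDerivAt.fun_sum fun j _ => ?_
  have h := (hasDerivAt_pow (eCount (H j) - 1) a).const_mul (β j * (eCount (H j) : ℝ))
  rw [Nat.sub_sub] at h
  refine h.congr_deriv ?_
  rcases Nat.eq_zero_or_pos (eCount (H j)) with h0 | h0
  · simp [h0]
  · rw [Nat.cast_pred h0]

lemma card_edgeIdx : (Fintype.card (EdgeIdx n) : ℝ) = (n : ℝ) * (n - 1) / 2 := by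
  have h : Fintype.card (EdgeIdx n) = n.choose 2 := by
    have h := card_edgeImage (⊤ : SimpleGraph (Fin n)) (Function.Embedding.refl _)
    rw [eq_univ_of_forall fun t => (mem_edgeImage _).2 ⟨t.1.1, t.1.2, t.2.ne, rfl, rfl⟩,
      card_univ, eCount, Nat.card_eq_fintype_card, ← Set.toFinset_card] at h
    rw [h]
    simpa using SimpleGraph.card_edgeFinset_top_eq_card_choose_two (V := Fin n)
  rw [h, Nat.cast_choose_two]

/-- A constant, independent of `n`, controlling the errors in the local densities. -/
def ergmConst : ℝ :=
  2 + ∑ j, |β j| * ((v j : ℝ) ^ 3 + 2 * eCount (H j) * (1 + eCount (H j)) * (v j : ℝ) ^ 2)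

lemma isDobrushin_ergm (hβ : ∀ j : Fin (k + 1), j ≠ 0 → 0 < β j) (he0 : eCount (H 0) = 1)
    (hv : ∀ j, 2 ≤ v j) (hedges : ∀ j : Fin (k + 1), j ≠ 0 → 2 ≤ eCount (H j))
    {p : ℝ} (hp : p ∈ Set.Ioo (0 : ℝ) 1) (hfix : phiFn β v H p = p)
    (hdob : deriv (PhiFn β v H) 1 < 2) (hn : 2 ≤ n) :
    IsDobrushin (ergmEdges v H n) (ergmCoeff β v n) (deriv (PhiFn β v H) 1 / 2)
      (ergmConst β H) (1 + ∑ j, (eCount (H j) : ℝ)) (n : ℝ)⁻¹ p (2 * PhiFn β v H p)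
      (2 * deriv (PhiFn β v H) p) := by
  have hn0 : (0 : ℝ) < n := by positivity
  have hn2 : (2 : ℝ) ≤ n := by exact_mod_cast hn
  have he (j) : 1 ≤ eCount (H j) := by
    by_cases hj : j = 0
    · rw [hj, he0]
    · exact (hedges j hj).trans' one_le_two
  have he1 (j) : (1 : ℝ) ≤ eCount (H j) := by exact_mod_cast he j
  have hβe (j) : |β j| * ((eCount (H j) : ℝ) - 1) = β j * ((eCount (H j) : ℝ) - 1) := by
    by_cases hj : j = 0
    · subst hj; simp [he0]
    · rw [abs_of_pos (hβ j hj)]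
  have hK (g : Fin (k + 1) → ℝ) (hg : ∀ j, g j ≤ (v j : ℝ) ^ 3 +
      2 * eCount (H j) * (1 + eCount (H j)) * (v j : ℝ) ^ 2) :
      (∑ j, |β j| * g j) * (n : ℝ)⁻¹ ≤ ergmConst β H * (n : ℝ)⁻¹ := by
    refine mul_le_mul_of_nonneg_right ?_ (by positivity)
    refine (sum_le_sum fun j _ => mul_le_mul_of_nonneg_left (hg j) (abs_nonneg _)).trans ?_
    rw [ergmConst]
    linarith
  have hK2 : 2 ≤ ergmConst β H := le_add_of_nonneg_right (by positivity)
  have hpow (i : ℕ) : |p ^ i| ≤ 1 := by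
    rw [abs_of_nonneg (pow_nonneg hp.1.le _)]
    exact pow_le_one₀ hp.1.le hp.2.le
  refine
    { ρ_nonneg := ?_
      ρ_lt_one := by linarith
      one_le_K := by linarith
      one_le_m := le_add_of_nonneg_right (by positivity)
      η_pos := by positivity
      η_le_one := inv_le_one_of_one_le₀ (by linarith)
      sigmoid_eq := ?_
      card_le := fun α => ?_
      jointWeight_le := fun s t hst => ?_
      sum_jointWeight_le := fun s => ?_
      first_order := fun s => ?_
      second_order := fun s => ?_
      one_le_card := ?_ }
  · rw [(hasDerivAt_PhiFn β H 1).deriv]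
    refine div_nonneg (sum_nonneg fun j _ => ?_) two_pos.le
    rw [show β j * (eCount (H j) : ℝ) * (((eCount (H j) : ℝ) - 1) * 1 ^ (eCount (H j) - 2)) =
      eCount (H j) * (β j * ((eCount (H j) : ℝ) - 1)) by rw [one_pow]; ring, ← hβe]
    have := he1 j
    have : 0 ≤ (eCount (H j) : ℝ) - 1 := by linarith
    positivity
  · rw [sigmoid_def]
    rw [phiFn] at hfix
    conv_rhs => rw [← hfix]
    rw [exp_neg]
    field_simp
  · rw [card_ergmEdges]
    have := single_le_sum (f := fun j => (eCount (H j) : ℝ)) (fun _ _ => by positivity)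
      (mem_univ α.1)
    linarith
  · exact (jointWeight_ergm_le β H hn hst).trans
      (hK (fun j => (v j : ℝ) ^ 3) fun j => le_add_of_nonneg_right (by positivity))
  · rw [← sum_abs_coeff_mul]
    simp only [card_ergmEdges, ergmCoeff]
    rw [sum_mem_ergmEdges H (fun j => |β j * (n : ℝ) ^ ((2 : ℤ) - (v j : ℤ))| *
      ((eCount (H j) : ℝ) - 1)) s, (hasDerivAt_PhiFn β H 1).deriv,
      show ∀ x : ℝ, 4 * (x / 2) = 2 * x by intro x; ring, mul_sum]
    refine sum_le_sum fun j _ => ?_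
    rw [abs_mul, abs_of_pos (zpow_pos hn0 _)]
    have := he1 j
    have h0 : 0 ≤ (eCount (H j) : ℝ) - 1 := by linarith
    calc _ = 2 * (eCount (H j) : ℝ) * (|β j| * ((eCount (H j) : ℝ) - 1)) *
          (((n - 2).descFactorial (v j - 2) : ℝ) * (n : ℝ) ^ ((2 : ℤ) - (v j : ℤ))) := by ring
      _ ≤ 2 * (eCount (H j) : ℝ) * (|β j| * ((eCount (H j) : ℝ) - 1)) * 1 := by
          gcongr
          exact descFactorial_mul_zpow_le_one hn (hv j)
      _ = _ := by rw [hβe, one_pow]; ring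
  · simp only [card_ergmEdges]
    refine (abs_sum_mem_ergmEdges_sub_le β hv hn (fun j => p ^ (eCount (H j) - 1)) s).trans
      (le_trans (le_of_eq ?_) (hK (fun j => 2 * eCount (H j) * |p ^ (eCount (H j) - 1)| *
        (v j : ℝ) ^ 2) fun j => ?_))
    · congr 1
      exact sum_congr rfl fun j _ => by ring
    · calc _ ≤ 2 * (eCount (H j) : ℝ) * 1 * (v j : ℝ) ^ 2 := by
            gcongr; exact hpow _
        _ ≤ 2 * eCount (H j) * (1 + eCount (H j)) * (v j : ℝ) ^ 2 := by
            gcongr; linarith [he1 j]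
        _ ≤ _ := le_add_of_nonneg_left (by positivity)
  · simp only [card_ergmEdges]
    rw [(hasDerivAt_PhiFn β H p).deriv]
    refine (abs_sum_mem_ergmEdges_sub_le β hv hn
      (fun j => ((eCount (H j) : ℝ) - 1) * p ^ (eCount (H j) - 2)) s).trans
      (le_trans (le_of_eq ?_) (hK (fun j => 2 * eCount (H j) *
        |((eCount (H j) : ℝ) - 1) * p ^ (eCount (H j) - 2)| * (v j : ℝ) ^ 2) fun j => ?_))
    · congr 1
      exact sum_congr rfl fun j _ => by ring
    · have := he1 j
      have h0 : 0 ≤ (eCount (H j) : ℝ) - 1 := by linarith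
      calc _ ≤ 2 * (eCount (H j) : ℝ) * (1 + eCount (H j)) * (v j : ℝ) ^ 2 := by
            gcongr
            rw [abs_mul, abs_of_nonneg h0]
            nlinarith [mul_le_mul_of_nonneg_left (hpow (eCount (H j) - 2)) h0]
        _ ≤ _ := le_add_of_nonneg_left (by positivity)
  · rw [card_edgeIdx]
    calc (1 : ℝ) ≤ 2 * (n : ℝ)⁻¹ * ((n : ℝ) * (n - 1) / 2) := by
          field_simp; linarith
      _ ≤ _ := by
          gcongr
          exact div_nonneg (mul_nonneg hn0.le (by linarith)) two_pos.le

end ErgmHamiltonian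

section NormalApproximation

variable {k : ℕ} {β : Fin (k + 1) → ℝ} {v : Fin (k + 1) → ℕ}
  {H : ∀ j : Fin (k + 1), SimpleGraph (Fin (v j))} {n : ℕ} {p κ : ℝ}

lemma sqrt_sigmaSq (hκ : 0 ≤ κ)
    (hκ2 : κ ^ 2 = p * (1 - p) / (1 - p * (1 - p) * (2 * deriv (PhiFn β v H) p))) :
    √(sigmaSq β v H p n) = κ * √(Fintype.card (EdgeIdx n)) := by
  have : sigmaSq β v H p n = κ ^ 2 * Fintype.card (EdgeIdx n) := by
    rw [hκ2, card_edgeIdx, sigmaSq]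
    ring
  rw [this, Real.sqrt_mul (sq_nonneg κ), Real.sqrt_sq hκ]

lemma Wn_eq_stdSum : Wn β v H p n =
    stdSum (ham (ergmEdges v H n) (ergmCoeff β v n)) √(sigmaSq β v H p n) := by
  funext y
  simp only [Wn, stdSum, muN, ergmExp, gE, ← ergmProb_eq_gibbs, ← edgeSum_eq_sum_mono]

lemma two_le_card_of_eCount_pos {w : ℕ} {G : SimpleGraph (Fin w)} (hG : 0 < eCount G) :
    2 ≤ w := by
  obtain ⟨⟨⟨e, he⟩⟩, -⟩ := Nat.card_pos_iff.1 hG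
  induction e with | _ a b
  have := card_le_univ {a, b}
  rwa [card_pair (G.ne_of_adj he), Fintype.card_fin] at this

/-- In Dobrushin's uniqueness region the limiting variance factor is positive. -/
lemma one_sub_variance_factor_pos (hβ : ∀ j : Fin (k + 1), j ≠ 0 → 0 < β j)
    (he0 : eCount (H 0) = 1) (hp : p ∈ Set.Ioo (0 : ℝ) 1)
    (hdob : deriv (PhiFn β v H) 1 < 2) :
    0 < 1 - p * (1 - p) * (2 * deriv (PhiFn β v H) p) := by
  have hle : deriv (PhiFn β v H) p ≤ deriv (PhiFn β v H) 1 := by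
    rw [(hasDerivAt_PhiFn β H p).deriv, (hasDerivAt_PhiFn β H 1).deriv]
    refine sum_le_sum fun j _ => ?_
    by_cases hj : j = 0
    · subst hj; simp [he0]
    · rcases Nat.eq_zero_or_pos (eCount (H j)) with h0 | h0
      · simp [h0]
      have h1 : 0 ≤ (eCount (H j) : ℝ) - 1 := by
        rw [sub_nonneg]; exact_mod_cast h0
      have := hβ j hj
      gcongr
      · exact hp.1.le
      · exact hp.2.le
  have hq : 0 < p * (1 - p) := mul_pos hp.1 (by linarith [hp.2])
  nlinarith [sq_nonneg (p - 1 / 2)]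

lemma abs_ergm_sub_le {ρ K m θ θ' σ B E : ℝ} {f g G q : ℝ → ℝ}
    (hD : IsDobrushin (ergmEdges v H n) (ergmCoeff β v n) ρ K m (n : ℝ)⁻¹ p θ θ')
    (hκ : 0 < κ) (hκ2 : κ ^ 2 * (1 - p * (1 - p) * θ') = p * (1 - p))
    (hσ : σ = κ * √(Fintype.card (EdgeIdx n))) (hB : 0 ≤ B) (hBE : B ≤ E)
    (hf : IsSteinSolution q B f g G) :
    |gE (ham (ergmEdges v H n) (ergmCoeff β v n)) (fun y =>
        q (stdSum (ham (ergmEdges v H n) (ergmCoeff β v n)) σ y))| ≤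
      E * steinConst ρ K m p κ * (n : ℝ) ^ (-(1 / 2 : ℝ)) := by
  have hσ0 : 0 < σ⁻¹ := by
    have := hD.nonempty
    have : (0 : ℝ) < Fintype.card (EdgeIdx n) := by exact_mod_cast Fintype.card_pos
    rw [hσ]
    positivity
  have h := hD.abs_gE_stein_le hκ hκ2 hσ hB hf.abs_f_le hf.abs_g_le hf.abs_G_le
    (hf.incr_left _ hσ0) (hf.incr_right _ hσ0)
  simp only [hf.eq] at h
  refine h.trans ?_
  rw [Real.rpow_neg (by positivity), ← Real.sqrt_eq_rpow, Real.sqrt_inv]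
  gcongr
  exact (hD.steinConst_pos hκ).le

end NormalApproximation

/-- **Theorem 3.2 (Dobrushin's uniqueness region)**: CLT with rate `n^{-1/2}`, in both the
Wasserstein and the Kolmogorov distances, for the standardized number of edges of an ERGM in
Dobrushin's uniqueness region `Φ_β'(1) < 2` (within the subcritical region). -/
theorem ergm_dobrushin_clt {k : ℕ} (β : Fin (k + 1) → ℝ) (v : Fin (k + 1) → ℕ)
    (H : ∀ j : Fin (k + 1), SimpleGraph (Fin (v j)))
    -- `β₂, …, β_k > 0`
    (hβ : ∀ j : Fin (k + 1), j ≠ 0 → 0 < β j)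
    -- `H₁` is a single edge
    (hv0 : v 0 = 2) (he0 : eCount (H 0) = 1)
    -- the graphs have no isolated vertices
    (hnoiso : ∀ (j : Fin (k + 1)) (a : Fin (v j)), ∃ b, (H j).Adj a b)
    -- `H₂, …, H_k` have at least two edges
    (hedges : ∀ j : Fin (k + 1), j ≠ 0 → 2 ≤ eCount (H j))
    -- the subcritical region: unique fixed point `p ∈ (0,1)` with `φ_β'(p) < 1`
    (p : ℝ) (hp : p ∈ Set.Ioo (0 : ℝ) 1)
    (hfix : phiFn β v H p = p)
    (huniq : ∀ q ∈ Set.Ioo (0 : ℝ) 1, phiFn β v H q = q → q = p)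
    (hsub : deriv (phiFn β v H) p < 1)
    -- Dobrushin's uniqueness region `Φ_β'(1) < 2`
    (hdob : deriv (PhiFn β v H) 1 < 2) :
    ∃ C : ℝ, 0 < C ∧ ∀ n : ℕ, 2 ≤ n →
      (∀ ψ : ℝ → ℝ, LipschitzWith 1 ψ →
        |(∑ y : EdgeIdx n → Bool, ergmProb β v H n y * ψ (Wn β v H p n y)) -
            ∫ z, ψ z ∂(gaussianReal 0 1)| ≤ C * (n : ℝ) ^ (-(1 / 2 : ℝ))) ∧
      (∀ x : ℝ,
        |(∑ y : EdgeIdx n → Bool,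
              Set.indicator {y' : EdgeIdx n → Bool | Wn β v H p n y' ≤ x}
                (ergmProb β v H n) y) -
            ((gaussianReal 0 1) (Set.Iic x)).toReal| ≤ C * (n : ℝ) ^ (-(1 / 2 : ℝ))) := by
  have hv (j : Fin (k + 1)) : 2 ≤ v j := by
    refine two_le_card_of_eCount_pos (G := H j) ?_
    by_cases hj : j = 0
    · rw [hj, he0]
      exact one_pos
    · exact two_pos.trans_le (hedges j hj)
  have hν := one_sub_variance_factor_pos hβ he0 hp hdob
  have hpq : 0 < p * (1 - p) := mul_pos hp.1 (by linarith [hp.2])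
  set ν := 1 - p * (1 - p) * (2 * deriv (PhiFn β v H) p) with hν_def
  have hκ : 0 < √(p * (1 - p) / ν) := Real.sqrt_pos.2 (div_pos hpq hν)
  have hκ2 : √(p * (1 - p) / ν) ^ 2 = p * (1 - p) / ν := Real.sq_sqrt (div_pos hpq hν).le
  set κ := √(p * (1 - p) / ν)
  have hκν : κ ^ 2 * ν = p * (1 - p) := by rw [hκ2, div_mul_cancel₀ _ hν.ne']
  have hD (n : ℕ) (hn : 2 ≤ n) := isDobrushin_ergm β H hβ he0 hv hedges hp hfix hdob hn
  let S := steinConst (deriv (PhiFn β v H) 1 / 2) (ergmConst β H)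
    (1 + ∑ j, (eCount (H j) : ℝ)) p κ
  have hS0 : 0 < S := (hD 2 le_rfl).steinConst_pos hκ
  have hM : 0 ≤ millsMoment 0 0 := millsMoment_nonneg 0 0
  have hs := steinBound_pos
  refine ⟨(steinBound + (millsMoment 0 0 + 2)) * S, by positivity, fun n hn => ⟨fun ψ hψ => ?_,
    fun x => ?_⟩⟩
  · obtain ⟨f, g, hf⟩ := exists_isSteinSolution_lipschitz hψ
    have h := abs_ergm_sub_le (hD n hn) hκ hκν (sqrt_sigmaSq hκ.le hκ2) hs.le
      (le_add_of_nonneg_right (by linarith) : steinBound ≤ steinBound + (millsMoment 0 0 + 2)) hf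
    rw [gE_sub, gE_const, ← Wn_eq_stdSum, gE, ← ergmProb_eq_gibbs] at h
    exact h
  · have h := abs_ergm_sub_le (hD n hn) hκ hκν (sqrt_sigmaSq hκ.le hκ2)
      (by linarith : 0 ≤ millsMoment 0 0 + 2)
      (le_add_of_nonneg_left hs.le : millsMoment 0 0 + 2 ≤ steinBound + (millsMoment 0 0 + 2))
      (isSteinSolution_indicator x)
    rw [gE_sub, gE_const, ← Wn_eq_stdSum, gE, ← ergmProb_eq_gibbs] at h
    convert h using 4 with y
    simp [Set.indicator_apply]
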